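/- arXiv:2403.06784 — 2 statements merged into one kernel-verified Lean document; each statement's English description precedes it below -/
import Mathlib

section
/- Let B_a ⊂ ℝⁿ (n ≥ 3) be the open ball of radius a centered at the origin, and let f ∈ C¹(ℝ) be a convex function. If u is a positive stable solution of −Δu = f(u) in B_a with u = 0 on ∂B_a, then u is radially symmetric: there exists a function v : [0,a] → ℝ with u(x) = v(|x|) for all x ∈ B_a. -/
open MeasureTheory Set

noncomputable def pd {m : ℕ} (u : EuclideanSpace ℝ (Fin m) → ℝ) (i : Fin m)
    (x : EuclideanSpace ℝ (Fin m)) : ℝ :=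
  fderiv ℝ u x (EuclideanSpace.single i 1)

noncomputable def lap {m : ℕ} (u : EuclideanSpace ℝ (Fin m) → ℝ)
    (x : EuclideanSpace ℝ (Fin m)) : ℝ :=
  ∑ i, pd (pd u i) i x

/-- Positivity of the quadratic form of the linearized operator `-Δ - c` on `H¹₀(Ω)`,
expressed via (nonzero) smooth compactly supported test functions supported in `Ω`. -/
def StableOn {m : ℕ} (Ω : Set (EuclideanSpace ℝ (Fin m)))
    (c : EuclideanSpace ℝ (Fin m) → ℝ) : Prop :=
  ∀ φ : EuclideanSpace ℝ (Fin m) → ℝ, ContDiff ℝ (⊤ : ℕ∞) φ → HasCompactSupport φ →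
    tsupport φ ⊆ Ω → φ ≠ 0 →
    (∫ x in Ω, ‖gradient φ x‖ ^ 2) - (∫ x in Ω, c x * φ x ^ 2) > 0

/-!
For a linear isometric involution `R` preserving the domain, convexity of `f` makes
`w = u - u ∘ R` a subsolution of `-Δ w = f'(u) w` wherever it is positive. Testing with `w⁺`
shows that the semistable energy form vanishes at `w⁺`, so by Cauchy–Schwarz `w⁺` lies in its
kernel, i.e. it is a distributional solution of `Δ p + f'(u) p = 0`. A radial barrier gives unique
continuation for nonnegative solutions of this equation. If `w` were positive at `x`, it would be
negative near `R x` because `w ∘ R = -w`; then `w⁺` would vanish near `R x`, hence everywhere.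
So `u ≤ u ∘ R`, and reflections exchange any two points of equal norm.

As `w⁺` is only Lipschitz, it is approximated by `C¹` truncations of `w`, and `C¹` test functions
are in turn mollified to meet the smooth test functions in the definition of stability.
-/

section

open Filter Topology InnerProductSpace Metric
open scoped Gradient Laplacian Distributions ContDiff

section Calculus

variable {E : Type*} [NormedAddCommGroup E] [InnerProductSpace ℝ E]

section Gradient

variable [CompleteSpace E] {f g : E → ℝ} {x : E}

lemma norm_gradient_sub_gradient (f g : E → ℝ) (x : E) :
    ‖∇ f x - ∇ g x‖ = ‖fderiv ℝ f x - fderiv ℝ g x‖ := by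
  rw [gradient, gradient, ← map_sub, LinearIsometryEquiv.norm_map]

lemma continuous_gradient (hf : ContDiff ℝ 1 f) : Continuous (∇ f) :=
  (toDual ℝ E).symm.continuous.comp (hf.continuous_fderiv one_ne_zero)

lemma tsupport_gradient_subset (f : E → ℝ) : tsupport (∇ f) ⊆ tsupport f :=
  (tsupport_comp_subset (map_zero _) (fderiv ℝ f)).trans (tsupport_fderiv_subset ℝ)

lemma gradient_comp_of_hasDerivAt {G : ℝ → ℝ} {G' : ℝ} (hG : HasDerivAt G G' (f x))
    (hf : DifferentiableAt ℝ f x) : ∇ (G ∘ f) x = G' • ∇ f x := by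
  rw [gradient, gradient, (hG.comp_hasFDerivAt x hf.hasFDerivAt).fderiv, map_smul]

lemma inner_gradient_self_eq_inner_gradient_comp {w φ ψ : E → ℝ} {G H : ℝ → ℝ}
    (hw : DifferentiableAt ℝ w x) (hG : DifferentiableAt ℝ G (w x))
    (hH : DifferentiableAt ℝ H (w x)) (hGH : deriv H (w x) = deriv G (w x) ^ 2)
    (hφ : φ =ᶠ[𝓝 x] G ∘ w) (hψ : ψ =ᶠ[𝓝 x] H ∘ w) :
    ⟪∇ φ x, ∇ φ x⟫_ℝ = ⟪∇ w x, ∇ ψ x⟫_ℝ := by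
  rw [hφ.gradient_eq, hψ.gradient_eq, gradient_comp_of_hasDerivAt hG.hasDerivAt hw,
    gradient_comp_of_hasDerivAt hH.hasDerivAt hw, hGH]
  simp only [real_inner_smul_left, real_inner_smul_right]
  ring

end Gradient

variable [FiniteDimensional ℝ E] {f : E → ℝ}

lemma laplacian_eq_sum_fderiv_fderiv {ι : Type*} [Fintype ι] (b : OrthonormalBasis ι ℝ E) {x : E}
    (hf : ContDiffAt ℝ 2 f x) :
    Δ f x = ∑ i, fderiv ℝ (fun y => fderiv ℝ f y (b i)) x (b i) := by
  rw [laplacian_eq_iteratedFDeriv_orthonormalBasis f b]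
  refine Finset.sum_congr rfl fun i _ => ?_
  have hd : DifferentiableAt ℝ (fderiv ℝ f) x :=
    (hf.fderiv_right (m := 1) (by norm_num)).differentiableAt one_ne_zero
  rw [iteratedFDeriv_two_apply, fderiv_clm_apply hd (differentiableAt_const _)]
  simp

lemma lap_eq_laplacian {m : ℕ} {u : EuclideanSpace ℝ (Fin m) → ℝ} {x : EuclideanSpace ℝ (Fin m)}
    (hu : ContDiffAt ℝ 2 u x) : lap u x = Δ u x := by
  simp only [laplacian_eq_sum_fderiv_fderiv (EuclideanSpace.basisFun (Fin m) ℝ) hu,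
    EuclideanSpace.basisFun_apply]
  rfl

lemma laplacian_comp {g : ℝ → ℝ} {x : E} (hg : ContDiffAt ℝ 2 g (f x)) (hf : ContDiffAt ℝ 2 f x) :
    Δ (g ∘ f) x = deriv g (f x) * Δ f x + deriv (deriv g) (f x) * ‖∇ f x‖ ^ 2 := by
  let b := stdOrthonormalBasis ℝ E
  have hfderiv (i) : (fun y => fderiv ℝ (g ∘ f) y (b i)) =ᶠ[𝓝 x]
      fun y => (deriv g ∘ f) y * fderiv ℝ f y (b i) := by
    filter_upwards [hf.continuousAt.eventually (hg.eventually (by simp)), hf.eventually (by simp)]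
      with y hgy hfy
    rw [((hgy.differentiableAt two_ne_zero).hasDerivAt.comp_hasFDerivAt y
      (hfy.differentiableAt two_ne_zero).hasFDerivAt).fderiv]
    rfl
  have hg' : HasFDerivAt (deriv g ∘ f) (deriv (deriv g) (f x) • fderiv ℝ f x) x :=
    ((hg.derivWithin (m := 1) (by norm_num)).differentiableAt
      one_ne_zero).hasDerivAt.comp_hasFDerivAt x (hf.differentiableAt two_ne_zero).hasFDerivAt
  have hf' (i) : DifferentiableAt ℝ (fun y => fderiv ℝ f y (b i)) x :=
    ((hf.fderiv_right (m := 1) (by norm_num)).differentiableAt one_ne_zero).clm_apply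
      (differentiableAt_const _)
  rw [laplacian_eq_sum_fderiv_fderiv b (hg.comp x hf), laplacian_eq_sum_fderiv_fderiv b hf,
    ← b.sum_sq_norm_inner_left, Finset.mul_sum, Finset.mul_sum, ← Finset.sum_add_distrib]
  refine Finset.sum_congr rfl fun i _ => ?_
  rw [(hfderiv i).fderiv_eq, (hg'.fun_mul (hf' i).hasFDerivAt).fderiv, inner_gradient_left,
    Real.norm_eq_abs, sq_abs]
  simp only [add_apply, smul_apply, smul_eq_mul, Function.comp_apply]
  ring

lemma continuousOn_laplacian {s : Set E} (hs : IsOpen s) (hf : ContDiffOn ℝ 2 f s) :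
    ContinuousOn (Δ f) s := by
  let b := stdOrthonormalBasis ℝ E
  have hsum : ContinuousOn
      (fun x => ∑ i, fderiv ℝ (fun y => fderiv ℝ f y (b i)) x (b i)) s := by
    refine continuousOn_finsetSum _ fun i _ => ContinuousOn.clm_apply ?_ continuousOn_const
    exact (((hf.fderiv_of_isOpen hs (by norm_num)).clm_apply contDiffOn_const)
      |>.continuousOn_fderiv_of_isOpen hs le_rfl)
  exact hsum.congr fun x hx => laplacian_eq_sum_fderiv_fderiv b (hf.contDiffAt (hs.mem_nhds hx))

lemma tsupport_laplacian_subset (f : E → ℝ) : tsupport (Δ f) ⊆ tsupport f := by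
  refine closure_minimal (fun x hx => ?_) (isClosed_tsupport f)
  by_contra h
  have hf : f =ᶠ[𝓝 x] fun _ => 0 := notMem_tsupport_iff_eventuallyEq.1 h
  exact hx (by simp [(laplacian_congr_nhds hf).self_of_nhds])

lemma laplacian_comp_linearIsometryEquiv (R : E ≃ₗᵢ[ℝ] E) (f : E → ℝ) (x : E) :
    Δ (f ∘ R) x = Δ f (R x) := by
  let b := stdOrthonormalBasis ℝ E
  rw [laplacian_eq_iteratedFDeriv_orthonormalBasis (f ∘ R) b,
    laplacian_eq_iteratedFDeriv_orthonormalBasis f (b.map R)]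
  refine Finset.sum_congr rfl fun i _ => ?_
  have h := R.toContinuousLinearEquiv.iteratedFDerivWithin_comp_right f uniqueDiffOn_univ
    (mem_univ (R x)) 2
  simp only [preimage_univ, iteratedFDerivWithin_univ] at h
  refine (DFunLike.congr_fun h _).trans ?_
  rw [ContinuousMultilinearMap.compContinuousLinearMap_apply]
  congr 1
  ext j : 1
  fin_cases j <;> rfl

end Calculus

section Integration

variable {E : Type*} [NormedAddCommGroup E] [InnerProductSpace ℝ E] [FiniteDimensional ℝ E]
  [MeasurableSpace E] [BorelSpace E] {Ω : TopologicalSpace.Opens E}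

lemma integrable_mul_of_tsupport_subset {X : Type*} [TopologicalSpace X] [MeasurableSpace X]
    [OpensMeasurableSpace X] {μ : Measure X} [IsFiniteMeasureOnCompacts μ] {s : Set X}
    (hs : IsOpen s) {f g : X → ℝ} (hf : ContinuousOn f s) (hg : Continuous g)
    (hgc : HasCompactSupport g) (hgs : tsupport g ⊆ s) : Integrable (fun x => f x * g x) μ := by
  refine Continuous.integrable_of_hasCompactSupport ?_ hgc.mul_left
  refine continuous_of_tsupport fun x hx => ?_
  have hxs : x ∈ s := hgs (tsupport_mul_subset_right hx)
  exact (hf.continuousAt (hs.mem_nhds hxs)).mul hg.continuousAt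

lemma integrable_mul_fderiv_apply {f : E → ℝ} (hf : ContinuousOn f Ω) (φ : 𝓓^{1}(Ω, ℝ)) (v : E) :
    Integrable fun x => f x * fderiv ℝ φ x v :=
  integrable_mul_of_tsupport_subset Ω.isOpen hf
    ((φ.contDiff.continuous_fderiv one_ne_zero).clm_apply continuous_const)
    (φ.hasCompactSupport.fderiv_apply ℝ v)
    ((tsupport_fderiv_apply_subset ℝ v).trans φ.tsupport_subset)

lemma integrable_fderiv_apply_mul {f : E → ℝ} (hf : ContDiffOn ℝ 1 f Ω) (φ : 𝓓^{1}(Ω, ℝ))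
    (v : E) : Integrable fun x => fderiv ℝ f x v * φ x :=
  integrable_mul_of_tsupport_subset Ω.isOpen
    ((hf.continuousOn_fderiv_of_isOpen Ω.isOpen le_rfl).clm_apply continuousOn_const)
    φ.continuous φ.hasCompactSupport φ.tsupport_subset

lemma integral_mul_fderiv_apply_eq_neg {f : E → ℝ} (hf : ContDiffOn ℝ 1 f Ω) (φ : 𝓓^{1}(Ω, ℝ))
    (v : E) : ∫ x, f x * fderiv ℝ φ x v = -∫ x, fderiv ℝ f x v * φ x :=
  integral_mul_fderiv_eq_neg_fderiv_mul_of_integrable (integrable_fderiv_apply_mul hf φ v)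
    (integrable_mul_fderiv_apply hf.continuousOn φ v)
    (integrable_mul_of_tsupport_subset Ω.isOpen hf.continuousOn φ.continuous
      φ.hasCompactSupport φ.tsupport_subset)
    (fun _ hx => (hf.contDiffAt
      (Ω.isOpen.mem_nhds (φ.tsupport_subset hx))).differentiableAt one_ne_zero)
    (fun x _ => φ.contDiff.differentiable one_ne_zero x)

lemma setIntegral_inner_gradient_eq_neg {u : E → ℝ} (hu : ContDiffOn ℝ 2 u Ω)
    (φ : 𝓓^{1}(Ω, ℝ)) : ∫ x in Ω, ⟪∇ u x, ∇ φ x⟫_ℝ = -∫ x in Ω, Δ u x * φ x := by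
  let b := stdOrthonormalBasis ℝ E
  have hφ {x} (hx : x ∉ Ω) : x ∉ tsupport φ := fun h => hx (φ.tsupport_subset h)
  have hu' (i) : ContDiffOn ℝ 1 (fun y => fderiv ℝ u y (b i)) Ω :=
    (hu.fderiv_of_isOpen Ω.isOpen (by norm_num)).clm_apply contDiffOn_const
  calc ∫ x in Ω, ⟪∇ u x, ∇ φ x⟫_ℝ = ∫ x, ⟪∇ u x, ∇ φ x⟫_ℝ :=
        setIntegral_eq_integral_of_forall_compl_eq_zero fun x hx => by
          rw [image_eq_zero_of_notMem_tsupport fun h => hφ hx (tsupport_gradient_subset φ h),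
            inner_zero_right]
    _ = ∫ x, ∑ i, fderiv ℝ u x (b i) * fderiv ℝ φ x (b i) := by
        congr 1 with x
        rw [← b.sum_inner_mul_inner]
        simp only [inner_gradient_left, inner_gradient_right, conj_trivial]
    _ = -∫ x, ∑ i, fderiv ℝ (fun y => fderiv ℝ u y (b i)) x (b i) * φ x := by
        rw [integral_finsetSum _ fun i _ => integrable_mul_fderiv_apply (hu' i).continuousOn φ _,
          integral_finsetSum _ fun i _ => integrable_fderiv_apply_mul (hu' i) φ _,
          ← Finset.sum_neg_distrib]
        exact Finset.sum_congr rfl fun i _ => integral_mul_fderiv_apply_eq_neg (hu' i) φ _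
    _ = -∫ x in Ω, ∑ i, fderiv ℝ (fun y => fderiv ℝ u y (b i)) x (b i) * φ x := by
        rw [setIntegral_eq_integral_of_forall_compl_eq_zero fun x hx => by
          simp [image_eq_zero_of_notMem_tsupport (hφ hx)]]
    _ = -∫ x in Ω, Δ u x * φ x := by
        rw [setIntegral_congr_fun Ω.isOpen.measurableSet fun x hx => ?_]
        rw [laplacian_eq_sum_fderiv_fderiv b (hu.contDiffAt (Ω.isOpen.mem_nhds hx)),
          Finset.sum_mul]

end Integration

section Mollification

open ContinuousLinearMap (lsmul)
open scoped Convolution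

variable {E : Type*} [NormedAddCommGroup E] [InnerProductSpace ℝ E] [FiniteDimensional ℝ E]
  [MeasurableSpace E] [BorelSpace E] {Ω : TopologicalSpace.Opens E}

lemma exists_forall_dist_normed_convolution_le {F : Type*} [NormedAddCommGroup F]
    [NormedSpace ℝ F] [CompleteSpace F] {g : E → F} (hg : UniformContinuous g) {δ : ℝ}
    (hδ : 0 < δ) : ∃ ρ > 0, ∀ b : ContDiffBump (0 : E), b.rOut ≤ ρ →
      ∀ x, dist ((b.normed volume ⋆[lsmul ℝ ℝ] g) x) (g x) ≤ δ := by
  obtain ⟨ρ, hρ, h⟩ := Metric.uniformContinuous_iff.1 hg δ hδ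
  exact ⟨ρ, hρ, fun b hb x => b.dist_normed_convolution_le hg.continuous.aestronglyMeasurable
    fun y hy => (h ((mem_ball.1 hy).trans_le hb)).le⟩

lemma tsupport_normed_convolution_subset {g : E → ℝ} (hg : HasCompactSupport g)
    (b : ContDiffBump (0 : E)) :
    tsupport (b.normed volume ⋆[lsmul ℝ ℝ] g) ⊆ cthickening b.rOut (tsupport g) := by
  refine closure_minimal ?_ isClosed_cthickening
  rw [← hg.isCompact.add_closedBall_zero b.rOut_pos.le]
  refine (support_convolution_subset_swap _).trans (add_subset_add subset_closure ?_)
  rw [b.support_normed_eq]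
  exact ball_subset_closedBall

lemma fderiv_normed_convolution {g : E → ℝ} (hg : ContDiff ℝ 1 g) (hgc : HasCompactSupport g)
    (b : ContDiffBump (0 : E)) : fderiv ℝ (b.normed volume ⋆[lsmul ℝ ℝ] g) =
      b.normed volume ⋆[lsmul ℝ ℝ] fderiv ℝ g := by
  have hb : LocallyIntegrable (b.normed volume) :=
    (b.contDiff_normed (n := 0)).continuous.locallyIntegrable
  have hprecomp : (lsmul ℝ ℝ).precompR E = (lsmul ℝ ℝ : ℝ →L[ℝ] (E →L[ℝ] ℝ) →L[ℝ] E →L[ℝ] ℝ) :=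
    rfl
  ext1 x
  rw [(hgc.hasFDerivAt_convolution_right _ hb hg x).fderiv, hprecomp]

lemma exists_testFunction_approx (φ : 𝓓^{1}(Ω, ℝ)) {δ : ℝ} (hδ : 0 < δ) :
    ∃ ψ : 𝓓(Ω, ℝ), (∀ x, ‖ψ x - φ x‖ ≤ δ) ∧ ∀ x, ‖∇ ψ x - ∇ φ x‖ ≤ δ := by
  have hφ' : Continuous (fderiv ℝ φ) := φ.contDiff.continuous_fderiv one_ne_zero
  obtain ⟨r, hr, hrΩ⟩ :=
    φ.hasCompactSupport.isCompact.exists_cthickening_subset_open Ω.isOpen φ.tsupport_subset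
  obtain ⟨ρ, hρ, hρφ⟩ := exists_forall_dist_normed_convolution_le
    (φ.hasCompactSupport.uniformContinuous_of_continuous φ.continuous) hδ
  obtain ⟨ρ', hρ', hρφ'⟩ := exists_forall_dist_normed_convolution_le
    ((φ.hasCompactSupport.fderiv ℝ).uniformContinuous_of_continuous hφ') hδ
  obtain ⟨s, hs, hsmin⟩ := exists_between (lt_min hr (lt_min hρ hρ'))
  obtain ⟨hsr, hsρ, hsρ'⟩ : s < r ∧ s < ρ ∧ s < ρ' := by simpa only [lt_min_iff] using hsmin
  let b : ContDiffBump (0 : E) := ⟨s / 2, s, half_pos hs, half_lt_self hs⟩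
  have hts : tsupport (b.normed volume ⋆[lsmul ℝ ℝ] φ) ⊆ cthickening r (tsupport φ) :=
    (tsupport_normed_convolution_subset φ.hasCompactSupport b).trans (cthickening_mono hsr.le _)
  let ψ : 𝓓(Ω, ℝ) := ⟨b.normed volume ⋆[lsmul ℝ ℝ] φ,
    b.hasCompactSupport_normed.contDiff_convolution_left _ b.contDiff_normed
      φ.continuous.locallyIntegrable,
    .of_support_subset_isCompact φ.hasCompactSupport.isCompact.cthickening
      ((subset_tsupport _).trans hts), hts.trans hrΩ⟩
  have hψ : fderiv ℝ ψ = b.normed volume ⋆[lsmul ℝ ℝ] fderiv ℝ φ :=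
    fderiv_normed_convolution φ.contDiff φ.hasCompactSupport b
  refine ⟨ψ, fun x => ?_, fun x => ?_⟩
  · rw [← dist_eq_norm]
    exact hρφ b hsρ.le x
  · rw [norm_gradient_sub_gradient, hψ, ← dist_eq_norm]
    exact hρφ' b hsρ'.le x

end Mollification

section TestFunctionGradient

variable {E : Type*} [NormedAddCommGroup E] [InnerProductSpace ℝ E] [CompleteSpace E]
  {Ω : TopologicalSpace.Opens E} (φ ψ : 𝓓^{1}(Ω, ℝ)) (x : E)

lemma gradient_testFunction_add : ∇ (φ + ψ) x = ∇ φ x + ∇ ψ x := by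
  rw [gradient, gradient, gradient, ← map_add, FunLike.coe_add,
    fderiv_add (φ.contDiff.differentiable one_ne_zero x) (ψ.contDiff.differentiable one_ne_zero x)]

lemma gradient_testFunction_smul (a : ℝ) : ∇ (a • φ) x = a • ∇ φ x := by
  rw [gradient, gradient, ← map_smul, FunLike.coe_smul,
    fderiv_const_smul (φ.contDiff.differentiable one_ne_zero x)]

lemma hasCompactSupport_gradient : HasCompactSupport (∇ φ) :=
  φ.hasCompactSupport.of_isClosed_subset (isClosed_tsupport _) (tsupport_gradient_subset φ)

end TestFunctionGradient

section Semistability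

variable {E : Type*} [NormedAddCommGroup E] [InnerProductSpace ℝ E] [FiniteDimensional ℝ E]
  [MeasurableSpace E] [BorelSpace E] {Ω : TopologicalSpace.Opens E} {c : E → ℝ}

/-- Nonnegativity of the quadratic form of `-Δ - c` on smooth functions with compact support
in `Ω`. -/
def SemistableOn (Ω : TopologicalSpace.Opens E) (c : E → ℝ) : Prop :=
  ∀ φ : 𝓓(Ω, ℝ), ∫ x in Ω, c x * φ x ^ 2 ≤ ∫ x in Ω, ‖∇ φ x‖ ^ 2

lemma StableOn.semistableOn {m : ℕ} {Ω : TopologicalSpace.Opens (EuclideanSpace ℝ (Fin m))}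
    {c : EuclideanSpace ℝ (Fin m) → ℝ} (h : StableOn Ω c) : SemistableOn Ω c := by
  intro φ
  by_cases hφ : (φ : EuclideanSpace ℝ (Fin m) → ℝ) = 0
  · simp [hφ, gradient]
  · exact (sub_pos.1 (h φ φ.contDiff φ.hasCompactSupport φ.tsupport_subset hφ)).le

lemma integrable_inner_gradient (φ ψ : 𝓓^{1}(Ω, ℝ)) :
    Integrable fun x => ⟪∇ φ x, ∇ ψ x⟫_ℝ := by
  refine ((continuous_gradient φ.contDiff).inner
    (continuous_gradient ψ.contDiff)).integrable_of_hasCompactSupport ?_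
  exact (hasCompactSupport_gradient φ).mono fun x hx h => hx (by simp [h])

lemma integrableOn_mul_testFunction (φ : 𝓓^{1}(Ω, ℝ)) (hc : IntegrableOn c Ω) :
    IntegrableOn (fun x => c x * φ x) Ω := by
  obtain ⟨M, hM⟩ := φ.hasCompactSupport.exists_bound_of_continuous φ.continuous
  exact hc.mul_bdd φ.continuous.aestronglyMeasurable (.of_forall hM)

lemma integrableOn_mul_testFunction_mul (φ ψ : 𝓓^{1}(Ω, ℝ)) (hc : IntegrableOn c Ω) :
    IntegrableOn (fun x => c x * (φ x * ψ x)) Ω := by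
  simpa only [mul_assoc] using
    integrableOn_mul_testFunction ψ (integrableOn_mul_testFunction φ hc)

/-- The bilinear form of the operator `-Δ - c` on `C¹` functions with compact support in `Ω`. -/
noncomputable def energyForm (hc : IntegrableOn c Ω) : LinearMap.BilinForm ℝ 𝓓^{1}(Ω, ℝ) :=
  have hint (φ ψ : 𝓓^{1}(Ω, ℝ)) :
      IntegrableOn (fun x => ⟪∇ φ x, ∇ ψ x⟫_ℝ - c x * (φ x * ψ x)) Ω :=
    (integrable_inner_gradient φ ψ).integrableOn.sub (integrableOn_mul_testFunction_mul φ ψ hc)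
  LinearMap.mk₂ ℝ (fun φ ψ => ∫ x in Ω, (⟪∇ φ x, ∇ ψ x⟫_ℝ - c x * (φ x * ψ x)))
    (fun φ₁ φ₂ ψ => by
      rw [← integral_add (hint φ₁ ψ) (hint φ₂ ψ)]
      congr 1 with x
      rw [gradient_testFunction_add, inner_add_left, add_apply]
      ring)
    (fun a φ ψ => by
      rw [smul_eq_mul, ← integral_const_mul]
      congr 1 with x
      rw [gradient_testFunction_smul, real_inner_smul_left, smul_apply, smul_eq_mul]
      ring)
    (fun φ ψ₁ ψ₂ => by
      rw [← integral_add (hint φ ψ₁) (hint φ ψ₂)]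
      congr 1 with x
      rw [gradient_testFunction_add, inner_add_right, add_apply]
      ring)
    (fun a φ ψ => by
      rw [smul_eq_mul, ← integral_const_mul]
      congr 1 with x
      rw [gradient_testFunction_smul, real_inner_smul_right, smul_apply, smul_eq_mul]
      ring)

lemma energyForm_apply (hc : IntegrableOn c Ω) (φ ψ : 𝓓^{1}(Ω, ℝ)) :
    energyForm hc φ ψ = (∫ x in Ω, ⟪∇ φ x, ∇ ψ x⟫_ℝ) - ∫ x in Ω, c x * (φ x * ψ x) :=
  integral_sub (integrable_inner_gradient φ ψ).integrableOn
    (integrableOn_mul_testFunction_mul φ ψ hc)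

lemma isSymm_energyForm (hc : IntegrableOn c Ω) : LinearMap.IsSymm (energyForm hc) :=
  ⟨fun φ ψ => by simp only [RingHom.id_apply, energyForm_apply, real_inner_comm, mul_comm]⟩

lemma energyForm_eq_neg_setIntegral (hc : IntegrableOn c Ω) (φ η : 𝓓^{1}(Ω, ℝ))
    (hη : ContDiff ℝ 2 η) :
    energyForm hc φ η = -∫ x in Ω, φ x * (Δ (η : E → ℝ) x + c x * η x) := by
  have hΔ : Integrable fun x => Δ (η : E → ℝ) x * φ x :=
    integrable_mul_of_tsupport_subset Ω.isOpen (continuousOn_laplacian Ω.isOpen hη.contDiffOn)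
      φ.continuous φ.hasCompactSupport φ.tsupport_subset
  rw [← (isSymm_energyForm hc).eq, RingHom.id_apply, energyForm_apply,
    setIntegral_inner_gradient_eq_neg hη.contDiffOn, ← neg_add',
    ← integral_add hΔ.integrableOn (integrableOn_mul_testFunction_mul η φ hc)]
  congr! 3 with x
  ring

lemma tendstoUniformly_of_norm_sub_le {ι α F : Type*} [SeminormedAddCommGroup F] {l : Filter ι}
    {g : ι → α → F} {g₀ : α → F} {δ : ι → ℝ} (hδ : Tendsto δ l (𝓝 0))
    (hg : ∀ i x, ‖g i x - g₀ x‖ ≤ δ i) : TendstoUniformly g g₀ l :=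
  Metric.tendstoUniformly_iff.2 fun ε hε => by
    filter_upwards [hδ.eventually_lt_const hε] with i hi x
    rw [dist_eq_norm']
    exact (hg i x).trans_lt hi

lemma tendsto_integral_mul_norm_sq {α F : Type*} [MeasurableSpace α] {μ : Measure α}
    [NormedAddCommGroup F] {c : α → ℝ} (hc : Integrable c μ) {g : ℕ → α → F} {g₀ : α → F}
    (hg : TendstoUniformly g g₀ atTop) (hgm : ∀ n, AEStronglyMeasurable (g n) μ) {M : ℝ}
    (hM : ∀ x, ‖g₀ x‖ ≤ M) :
    Tendsto (fun n => ∫ x, c x * ‖g n x‖ ^ 2 ∂μ) atTop (𝓝 (∫ x, c x * ‖g₀ x‖ ^ 2 ∂μ)) := by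
  refine tendsto_integral_filter_of_dominated_convergence (fun x => ‖c x‖ * (M + 1) ^ 2)
    (.of_forall fun n => hc.aestronglyMeasurable.mul ((hgm n).norm.pow 2)) ?_
    (hc.norm.mul_const _)
    (.of_forall fun x => ((hg.tendsto_at x).norm.pow 2).const_mul (c x))
  filter_upwards [Metric.tendstoUniformly_iff.1 hg 1 one_pos] with n hn
  refine .of_forall fun x => ?_
  have hgn : ‖g n x‖ ≤ M + 1 := by
    have hdist := (hn x).le
    rw [dist_eq_norm'] at hdist
    linarith [norm_le_norm_add_norm_sub' (g n x) (g₀ x), hM x]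
  rw [norm_mul, norm_pow, norm_norm]
  gcongr

lemma SemistableOn.energyForm_nonneg (h : SemistableOn Ω c) (hΩ : Bornology.IsBounded (Ω : Set E))
    (hc : IntegrableOn c Ω) (φ : 𝓓^{1}(Ω, ℝ)) : 0 ≤ energyForm hc φ φ := by
  choose ψ hψ hψ' using fun n : ℕ => exists_testFunction_approx φ (n.one_div_pos_of_nat (α := ℝ))
  have hlim := tendsto_one_div_add_atTop_nhds_zero_nat (𝕜 := ℝ)
  obtain ⟨M, hM⟩ := φ.hasCompactSupport.exists_bound_of_continuous φ.continuous
  obtain ⟨M', hM'⟩ := (hasCompactSupport_gradient φ).exists_bound_of_continuous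
    (continuous_gradient φ.contDiff)
  have hpot := tendsto_integral_mul_norm_sq hc (tendstoUniformly_of_norm_sub_le hlim hψ)
    (fun n => (ψ n).continuous.aestronglyMeasurable) hM
  have hone : IntegrableOn (fun _ : E => (1 : ℝ)) Ω := integrableOn_const hΩ.measure_lt_top.ne
  have hkin := tendsto_integral_mul_norm_sq hone (tendstoUniformly_of_norm_sub_le hlim hψ')
    (fun n => (continuous_gradient ((ψ n).contDiff.of_le (by simp))).aestronglyMeasurable) hM'
  rw [energyForm_apply, sub_nonneg]
  simpa only [one_mul, Real.norm_eq_abs, sq_abs, real_inner_self_eq_norm_sq, ← sq] using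
    le_of_tendsto_of_tendsto' hpot hkin fun n => by
      simpa only [one_mul, Real.norm_eq_abs, sq_abs] using h (ψ n)

end Semistability

section Truncation

/-- Truncated positive part: `G` is nonnegative, vanishes on `(-∞, ε]` and lies below the positive
part by at most `2 * ε`. -/
structure IsTruncation (ε : ℝ) (G : ℝ → ℝ) : Prop where
  eq_zero : ∀ t ≤ ε, G t = 0
  nonneg : ∀ t, 0 ≤ G t
  le : ∀ t, G t ≤ max 0 t
  ge : ∀ t, max 0 t - 2 * ε ≤ G t

lemma IsTruncation.abs_sub_le {ε : ℝ} {G : ℝ → ℝ} (hG : IsTruncation ε G) (t : ℝ) :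
    |G t - max 0 t| ≤ 2 * ε := by
  rw [abs_le]
  constructor <;> linarith [hG.le t, hG.ge t, (hG.nonneg t).trans (hG.le t)]

lemma IsTruncation.abs_mul_sub_sq_le {ε : ℝ} (hε : 0 ≤ ε) {G H : ℝ → ℝ} (hG : IsTruncation ε G)
    (hH : IsTruncation ε H) (t : ℝ) : |t * H t - G t ^ 2| ≤ 4 * ε * max 0 t := by
  rcases le_total t 0 with ht | ht
  · simp [hG.eq_zero t (ht.trans hε), hH.eq_zero t (ht.trans hε), ht]
  · have hG₁ := hG.le t
    have hG₂ := hG.ge t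
    have hH₁ := hH.le t
    have hH₂ := hH.ge t
    rw [max_eq_right ht] at *
    rw [abs_le]
    constructor <;> nlinarith [hG.nonneg t]

lemma isTruncation_integral {ε : ℝ} (hε : 0 ≤ ε) {θ : ℝ → ℝ} (hθ : Continuous θ)
    (hnonneg : ∀ t, 0 ≤ θ t) (hle : ∀ t, θ t ≤ 1) (hzero : ∀ t ≤ ε, θ t = 0)
    (hone : ∀ t, 2 * ε ≤ t → θ t = 1) : IsTruncation ε fun t => ∫ s in (0 : ℝ)..t, θ s := by
  have heq (t : ℝ) (ht : t ≤ ε) : ∫ s in (0 : ℝ)..t, θ s = 0 :=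
    intervalIntegral.integral_zero_ae (.of_forall fun s hs => hzero s (hs.2.trans (max_le hε ht)))
  have hpos (t : ℝ) (ht : 0 ≤ t) : 0 ≤ ∫ s in (0 : ℝ)..t, θ s :=
    intervalIntegral.integral_nonneg ht fun s _ => hnonneg s
  refine ⟨heq, fun t => ?_, fun t => ?_, fun t => ?_⟩ <;> rcases le_total t 0 with ht | ht
  · exact (heq t (ht.trans hε)).ge
  · exact hpos t ht
  · rw [heq t (ht.trans hε)]
    exact le_max_left 0 t
  · calc ∫ s in (0 : ℝ)..t, θ s ≤ ∫ _ in (0 : ℝ)..t, (1 : ℝ) :=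
          intervalIntegral.integral_mono_on ht (hθ.intervalIntegrable _ _)
            intervalIntegrable_const fun s _ => hle s
      _ = t := by simp
      _ ≤ max 0 t := le_max_right 0 t
  · rw [heq t (ht.trans hε), max_eq_left ht]
    linarith
  · rw [max_eq_right ht]
    rcases le_total t (2 * ε) with h | h
    · linarith [hpos t ht]
    · have htail : ∫ s in (2 * ε)..t, θ s = t - 2 * ε := by
        rw [intervalIntegral.integral_congr (g := fun _ => (1 : ℝ)) fun s hs =>
          hone s (uIcc_of_le h ▸ hs).1, integral_one]
      rw [← intervalIntegral.integral_add_adjacent_intervals (hθ.intervalIntegrable 0 (2 * ε))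
        (hθ.intervalIntegrable (2 * ε) t), htail]
      linarith [hpos (2 * ε) (by positivity)]

lemma exists_contDiff_isTruncation {ε : ℝ} (hε : 0 < ε) :
    ∃ G H : ℝ → ℝ, ContDiff ℝ 1 G ∧ ContDiff ℝ 1 H ∧ IsTruncation ε G ∧ IsTruncation ε H ∧
      ∀ t, deriv H t = deriv G t ^ 2 := by
  let θ : ℝ → ℝ := fun t => Real.smoothTransition ((t - ε) / ε)
  have hθ : Continuous θ := by fun_prop
  have hθ₂ : Continuous fun t => θ t ^ 2 := hθ.pow 2
  have hnonneg (t) : 0 ≤ θ t := Real.smoothTransition.nonneg _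
  have hle (t) : θ t ≤ 1 := Real.smoothTransition.le_one _
  have hzero (t) (ht : t ≤ ε) : θ t = 0 :=
    Real.smoothTransition.zero_of_nonpos (div_nonpos_of_nonpos_of_nonneg (by linarith) hε.le)
  have hone (t) (ht : 2 * ε ≤ t) : θ t = 1 :=
    Real.smoothTransition.one_of_one_le ((one_le_div hε).2 (by linarith))
  have hcontDiff {g : ℝ → ℝ} (hg : Continuous g) :
      ContDiff ℝ 1 fun t => ∫ s in (0 : ℝ)..t, g s := by
    refine contDiff_one_iff_deriv.2 ⟨fun t =>
      (hg.integral_hasStrictDerivAt 0 t).hasDerivAt.differentiableAt, ?_⟩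
    simpa only [funext (hg.deriv_integral g 0)] using hg
  refine ⟨_, _, hcontDiff hθ, hcontDiff hθ₂,
    isTruncation_integral hε.le hθ hnonneg hle hzero hone,
    isTruncation_integral hε.le hθ₂ (fun t => sq_nonneg _)
      (fun t => pow_le_one₀ (hnonneg t) (hle t)) (fun t ht => by simp [hzero t ht])
      (fun t ht => by simp [hone t ht]), fun t => ?_⟩
  rw [hθ.deriv_integral, hθ₂.deriv_integral]

variable {E : Type*} [NormedAddCommGroup E] [NormedSpace ℝ E] [ProperSpace E]
  {Ω : TopologicalSpace.Opens E} {w : E → ℝ}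

lemma exists_testFunction_eq_comp {n : ℕ∞} (hΩ : Bornology.IsBounded (Ω : Set E))
    (hw : ContDiffOn ℝ n w Ω) (hwc : ContinuousOn w (closure Ω))
    (hwf : ∀ x ∈ frontier (Ω : Set E), w x ≤ 0) {ε : ℝ} (hε : 0 < ε) {G : ℝ → ℝ}
    (hG : ContDiff ℝ n G) (hG₀ : ∀ t ≤ ε, G t = 0) :
    ∃ φ : 𝓓^{n}(Ω, ℝ), EqOn φ (G ∘ w) Ω := by
  let K : Set E := closure Ω ∩ w ⁻¹' Ici ε
  have hK : IsCompact K := hΩ.isCompact_closure.of_isClosed_subset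
    (hwc.preimage_isClosed_of_isClosed isClosed_closure isClosed_Ici) inter_subset_left
  have hKΩ : K ⊆ Ω := fun x hx => by
    by_contra hxΩ
    have hxf : x ∈ frontier (Ω : Set E) := ⟨hx.1, by rwa [Ω.isOpen.interior_eq]⟩
    exact (hwf x hxf).not_gt (hε.trans_le hx.2)
  have hsupp : Function.support ((Ω : Set E).indicator (G ∘ w)) ⊆ K := fun x hx => by
    obtain ⟨hxΩ, hGx⟩ := indicator_apply_ne_zero.1 hx
    exact ⟨subset_closure hxΩ, (not_le.1 fun h => hGx (hG₀ _ h)).le⟩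
  have htsupp : tsupport ((Ω : Set E).indicator (G ∘ w)) ⊆ Ω :=
    (closure_minimal hsupp hK.isClosed).trans hKΩ
  refine ⟨⟨_, contDiff_iff_contDiffAt.2 fun x => ?_, .of_support_subset_isCompact hK hsupp, htsupp⟩,
    fun x hx => indicator_of_mem hx _⟩
  by_cases hx : x ∈ tsupport ((Ω : Set E).indicator (G ∘ w))
  · have hxΩ : (Ω : Set E) ∈ 𝓝 x := Ω.isOpen.mem_nhds (htsupp hx)
    exact (hG.contDiffAt.comp x (hw.contDiffAt hxΩ)).congr_of_eventuallyEq
      (eqOn_indicator.eventuallyEq_of_mem hxΩ)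
  · exact contDiffAt_const.congr_of_eventuallyEq (notMem_tsupport_iff_eventuallyEq.1 hx)

end Truncation

section Subsolution

variable {E : Type*} [NormedAddCommGroup E] [InnerProductSpace ℝ E] [FiniteDimensional ℝ E]
  {Ω : TopologicalSpace.Opens E} {c w : E → ℝ}

/-- Classical subsolutions of `-Δ w = c w` in `Ω` with Dirichlet condition. The differential
inequality is only required where `w` is positive. -/
structure IsDirichletSubsolution (Ω : TopologicalSpace.Opens E) (c w : E → ℝ) : Prop where
  contDiffOn : ContDiffOn ℝ 2 w Ω
  continuousOn : ContinuousOn w (closure Ω)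
  nonpos_of_mem_frontier : ∀ x ∈ frontier (Ω : Set E), w x ≤ 0
  neg_laplacian_le : ∀ x ∈ Ω, 0 < w x → -Δ w x ≤ c x * w x

variable [MeasurableSpace E] [BorelSpace E]

/-- Distributional solutions of `Δ p + c p = 0` in `Ω`, tested against `C²` functions. -/
def IsDistribSolutionOn (Ω : TopologicalSpace.Opens E) (c p : E → ℝ) : Prop :=
  ∀ η : 𝓓^{2}(Ω, ℝ), ∫ x in Ω, p x * (Δ (η : E → ℝ) x + c x * η x) = 0

lemma integrableOn_mul_laplacian_add_mul {p : E → ℝ} (hp : ContinuousOn p Ω)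
    (hc : IntegrableOn c Ω) (η : 𝓓^{2}(Ω, ℝ)) :
    IntegrableOn (fun x => p x * (Δ (η : E → ℝ) x + c x * η x)) Ω := by
  have hη : IsCompact (tsupport η) := η.hasCompactSupport
  have hΔ : IntegrableOn (Δ (η : E → ℝ)) (tsupport η) :=
    ((continuousOn_laplacian isOpen_univ η.contDiff.contDiffOn).mono
      (subset_univ _)).integrableOn_compact hη
  have hcη : IntegrableOn (fun x => c x * η x) (tsupport η) :=
    (hc.mono_set η.tsupport_subset).mul_continuousOn η.continuous.continuousOn hη
  refine ((hΔ.add hcη).continuousOn_mul (hp.mono η.tsupport_subset) hη)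
    |>.of_forall_sdiff_eq_zero Ω.isOpen.measurableSet fun x hx => ?_
  have hΔx : Δ (η : E → ℝ) x = 0 :=
    image_eq_zero_of_notMem_tsupport fun h => hx.2 (tsupport_laplacian_subset _ h)
  simp only [Pi.add_apply, hΔx, image_eq_zero_of_notMem_tsupport hx.2, mul_zero, add_zero]

lemma IsTruncation.neg_mul_sub_mul_sq_le {ε M t ℓ a : ℝ} {G H : ℝ → ℝ} (hG : IsTruncation ε G)
    (hH : IsTruncation ε H) (hε : 0 ≤ ε) (hM : 0 ≤ M) (ht : t ≤ M) (hℓ : 0 < t → -ℓ ≤ a * t) :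
    -(ℓ * H t) - a * (G t * G t) ≤ 4 * ε * M * |a| := by
  have hsub : -ℓ * H t ≤ a * t * H t := by
    rcases lt_or_ge 0 t with h | h
    · exact mul_le_mul_of_nonneg_right (hℓ h) (hH.nonneg _)
    · simp [hH.eq_zero _ (h.trans hε)]
  calc -(ℓ * H t) - a * (G t * G t) ≤ a * (t * H t - G t ^ 2) := by linarith
    _ ≤ |a| * |t * H t - G t ^ 2| := by
        rw [← abs_mul]
        exact le_abs_self _
    _ ≤ |a| * (4 * ε * M) := by
        gcongr
        refine (hG.abs_mul_sub_sq_le hε hH t).trans ?_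
        gcongr
        exact max_le hM ht
    _ = 4 * ε * M * |a| := mul_comm _ _

lemma IsDirichletSubsolution.exists_testFunction_energyForm_le (hw : IsDirichletSubsolution Ω c w)
    (hΩ : Bornology.IsBounded (Ω : Set E)) (hc : IntegrableOn c Ω) {M : ℝ} (hM : 0 ≤ M)
    (hwM : ∀ x ∈ Ω, w x ≤ M) {ε : ℝ} (hε : 0 < ε) :
    ∃ φ : 𝓓^{1}(Ω, ℝ), (∀ x ∈ Ω, |φ x - max 0 (w x)| ≤ 2 * ε) ∧
      energyForm hc φ φ ≤ 4 * ε * M * ∫ x in Ω, |c x| := by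
  obtain ⟨G, H, hG, hH, hGε, hHε, hGH⟩ := exists_contDiff_isTruncation hε
  have hw₁ : ContDiffOn ℝ 1 w Ω := hw.contDiffOn.of_le one_le_two
  obtain ⟨φ, hφ⟩ := exists_testFunction_eq_comp hΩ hw₁ hw.continuousOn
    hw.nonpos_of_mem_frontier hε hG hGε.eq_zero
  obtain ⟨ψ, hψ⟩ := exists_testFunction_eq_comp hΩ hw₁ hw.continuousOn
    hw.nonpos_of_mem_frontier hε hH hHε.eq_zero
  have hnhds {x} (hx : x ∈ Ω) : (Ω : Set E) ∈ 𝓝 x := Ω.isOpen.mem_nhds hx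
  have hgrad : ∫ x in Ω, ⟪∇ φ x, ∇ φ x⟫_ℝ = ∫ x in Ω, ⟪∇ w x, ∇ ψ x⟫_ℝ :=
    setIntegral_congr_fun Ω.isOpen.measurableSet fun x hx =>
      inner_gradient_self_eq_inner_gradient_comp
        ((hw₁.contDiffAt (hnhds hx)).differentiableAt one_ne_zero)
        (hG.differentiable one_ne_zero _) (hH.differentiable one_ne_zero _) (hGH _)
        (hφ.eventuallyEq_of_mem (hnhds hx)) (hψ.eventuallyEq_of_mem (hnhds hx))
  have hΔ : IntegrableOn (fun x => -(Δ w x * ψ x)) Ω :=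
    (integrable_mul_of_tsupport_subset Ω.isOpen (continuousOn_laplacian Ω.isOpen hw.contDiffOn)
      ψ.continuous ψ.hasCompactSupport ψ.tsupport_subset).integrableOn.neg
  have hcφ : IntegrableOn (fun x => c x * (φ x * φ x)) Ω := integrableOn_mul_testFunction_mul φ φ hc
  refine ⟨φ, fun x hx => hφ hx ▸ hGε.abs_sub_le (w x), ?_⟩
  rw [energyForm_apply, hgrad, setIntegral_inner_gradient_eq_neg hw.contDiffOn, ← integral_neg,
    ← integral_sub hΔ hcφ, ← integral_const_mul]
  refine setIntegral_mono_on (hΔ.sub hcφ) (hc.abs.const_mul _) Ω.isOpen.measurableSet fun x hx => ?_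
  rw [hφ hx, hψ hx]
  exact hGε.neg_mul_sub_mul_sq_le hHε hε.le hM (hwM x hx) (hw.neg_laplacian_le x hx)

lemma tendsto_setIntegral_mul_of_abs_sub_le {α : Type*} [MeasurableSpace α] {μ : Measure α}
    {s : Set α} (hs : MeasurableSet s) {g p : α → ℝ} (hg : IntegrableOn g s μ) {φ : ℕ → α → ℝ}
    (hφg : ∀ n, IntegrableOn (fun x => φ n x * g x) s μ)
    (hpg : IntegrableOn (fun x => p x * g x) s μ) {δ : ℕ → ℝ} (hδ : Tendsto δ atTop (𝓝 0))
    (hφ : ∀ n, ∀ x ∈ s, |φ n x - p x| ≤ δ n) :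
    Tendsto (fun n => ∫ x in s, φ n x * g x ∂μ) atTop (𝓝 (∫ x in s, p x * g x ∂μ)) := by
  rw [tendsto_iff_norm_sub_tendsto_zero]
  refine squeeze_zero (fun _ => norm_nonneg _) (fun n => ?_)
    (by simpa only [zero_mul] using hδ.mul_const (∫ x in s, ‖g x‖ ∂μ))
  rw [← integral_sub (hφg n) hpg, ← integral_const_mul]
  refine norm_integral_le_of_norm_le (hg.norm.const_mul _) (ae_restrict_of_forall_mem hs ?_)
  intro x hx
  rw [← sub_mul, norm_mul]
  exact mul_le_mul_of_nonneg_right (hφ n x hx) (norm_nonneg _)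

theorem IsDirichletSubsolution.isDistribSolutionOn_max_zero (hw : IsDirichletSubsolution Ω c w)
    (hΩ : Bornology.IsBounded (Ω : Set E)) (hc : IntegrableOn c Ω) (hstab : SemistableOn Ω c) :
    IsDistribSolutionOn Ω c fun x => max 0 (w x) := by
  intro η
  let η' : 𝓓^{1}(Ω, ℝ) := ⟨η, η.contDiff.of_le one_le_two, η.hasCompactSupport, η.tsupport_subset⟩
  obtain ⟨M, hM⟩ := hΩ.isCompact_closure.exists_bound_of_continuousOn hw.continuousOn
  choose φ hφ hφE using fun n : ℕ => hw.exists_testFunction_energyForm_le hΩ hc (abs_nonneg M)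
    (fun x hx => (le_abs_self _).trans ((hM x (subset_closure hx)).trans (le_abs_self _)))
    (n.one_div_pos_of_nat (α := ℝ))
  have hε : Tendsto (fun n : ℕ => 1 / ((n : ℝ) + 1)) atTop (𝓝 0) :=
    tendsto_one_div_add_atTop_nhds_zero_nat
  have hint {p : E → ℝ} (hp : ContinuousOn p Ω) :=
    integrableOn_mul_laplacian_add_mul hp hc η
  have hlim : Tendsto (fun n => energyForm hc (φ n) η') atTop
      (𝓝 (-∫ x in Ω, max 0 (w x) * (Δ (η : E → ℝ) x + c x * η x))) := by
    simp only [energyForm_eq_neg_setIntegral hc _ η' η.contDiff]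
    refine (tendsto_setIntegral_mul_of_abs_sub_le Ω.isOpen.measurableSet
      (by simpa using hint continuousOn_const (p := fun _ => 1))
      (fun n => hint (φ n).continuous.continuousOn)
      (hint (continuousOn_const.sup (hw.continuousOn.mono subset_closure)))
      (by simpa using hε.const_mul 2) hφ).neg
  have hnonneg := hstab.energyForm_nonneg hΩ hc
  have hbound : Tendsto (fun n : ℕ => 4 * (1 / ((n : ℝ) + 1)) * |M| * (∫ x in Ω, |c x|) *
      energyForm hc η' η') atTop (𝓝 0) := by
    simpa using (((hε.const_mul 4).mul_const |M|).mul_const (∫ x in Ω, |c x|)).mul_const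
      (energyForm hc η' η')
  have hsq := le_of_tendsto_of_tendsto' (hlim.pow 2) hbound fun n =>
    ((energyForm hc).apply_sq_le_of_symm hnonneg (isSymm_energyForm hc) (φ n) η').trans
      (mul_le_mul_of_nonneg_right (hφE n) (hnonneg η'))
  simpa using pow_eq_zero_iff two_ne_zero |>.1 (le_antisymm hsq (sq_nonneg _))

end Subsolution

section Barrier

lemma hasDerivAt_max_zero_pow (k : ℕ) (t : ℝ) :
    HasDerivAt (fun t : ℝ => max 0 t ^ (k + 2)) ((k + 2 : ℝ) * max 0 t ^ (k + 1)) t := by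
  have hne : ∀ s : ℝ, s ≠ 0 →
      HasDerivAt (fun t : ℝ => max 0 t ^ (k + 2)) ((k + 2 : ℝ) * max 0 s ^ (k + 1)) s := by
    intro s hs
    rcases hs.lt_or_gt with h | h
    · rw [max_eq_left h.le, zero_pow k.succ_ne_zero, mul_zero]
      refine (hasDerivAt_const s (0 : ℝ)).congr_of_eventuallyEq ?_
      filter_upwards [Iio_mem_nhds h] with t ht
      rw [max_eq_left (mem_Iio.1 ht).le, zero_pow (k + 1).succ_ne_zero]
    · rw [max_eq_right h.le]
      refine HasDerivAt.congr_of_eventuallyEq (by simpa using hasDerivAt_pow (k + 2) s) ?_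
      filter_upwards [Ioi_mem_nhds h] with t ht
      rw [max_eq_right (mem_Ioi.1 ht).le]
  rcases eq_or_ne t 0 with rfl | ht
  · exact hasDerivAt_of_hasDerivAt_of_ne hne (by fun_prop) (by fun_prop)
  · exact hne t ht

lemma deriv_max_zero_pow (k : ℕ) :
    deriv (fun t : ℝ => max 0 t ^ (k + 2)) = fun t => (k + 2 : ℝ) * max 0 t ^ (k + 1) :=
  funext fun t => (hasDerivAt_max_zero_pow k t).deriv

lemma contDiff_max_zero_pow (k : ℕ) : ContDiff ℝ k fun t : ℝ => max 0 t ^ (k + 1) := by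
  induction k with
  | zero => exact contDiff_zero.2 (by fun_prop)
  | succ k ih =>
    rw [Nat.cast_succ, contDiff_succ_iff_deriv, deriv_max_zero_pow]
    exact ⟨fun t => (hasDerivAt_max_zero_pow k t).differentiableAt, by simp, contDiff_const.mul ih⟩

variable {E : Type*} [NormedAddCommGroup E]

/-- The radial bump `((r² - |x - q|²)₊)ⁿ`, a strict subsolution away from `q` once `n` is
large. -/
def radialBarrier (q : E) (r : ℝ) (n : ℕ) (x : E) : ℝ :=
  max 0 (r ^ 2 - ‖x - q‖ ^ 2) ^ n

lemma max_zero_sq_sub_norm_sub_sq_eq_zero {q x : E} {r : ℝ} (hr : 0 ≤ r) (hx : x ∉ ball q r) :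
    max 0 (r ^ 2 - ‖x - q‖ ^ 2) = 0 := by
  rw [mem_ball, not_lt, dist_eq_norm] at hx
  exact max_eq_left (sub_nonpos.2 (by gcongr))

lemma tsupport_radialBarrier_subset (q : E) {r : ℝ} (hr : 0 ≤ r) {n : ℕ} (hn : n ≠ 0) :
    tsupport (radialBarrier q r n) ⊆ closedBall q r := by
  refine closure_minimal (fun x hx => ball_subset_closedBall ?_) isClosed_closedBall
  by_contra h
  exact hx (by rw [radialBarrier, max_zero_sq_sub_norm_sub_sq_eq_zero hr h, zero_pow hn])

variable [InnerProductSpace ℝ E]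

lemma contDiff_const_sub_norm_sub_sq {n : WithTop ℕ∞} (a : ℝ) (q : E) :
    ContDiff ℝ n fun x => a - ‖x - q‖ ^ 2 :=
  contDiff_const.sub ((contDiff_id.sub contDiff_const).norm_sq ℝ)

lemma contDiff_radialBarrier (q : E) (r : ℝ) (k : ℕ) : ContDiff ℝ k (radialBarrier q r (k + 1)) :=
  (contDiff_max_zero_pow k).comp (contDiff_const_sub_norm_sub_sq _ q)

lemma hasFDerivAt_const_sub_norm_sub_sq (a : ℝ) (q x : E) :
    HasFDerivAt (fun y => a - ‖y - q‖ ^ 2) ((-2 : ℝ) • innerSL ℝ (x - q)) x := by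
  refine HasFDerivAt.congr_fderiv (((hasFDerivAt_id x).sub_const q).norm_sq.const_sub a) ?_
  ext v
  simp

lemma gradient_const_sub_norm_sub_sq [CompleteSpace E] (a : ℝ) (q x : E) :
    ∇ (fun y => a - ‖y - q‖ ^ 2) x = (-2 : ℝ) • (x - q) := by
  rw [gradient, (hasFDerivAt_const_sub_norm_sub_sq a q x).fderiv, map_smul]
  exact congrArg _ ((toDual ℝ E).symm_apply_apply _)

variable [FiniteDimensional ℝ E]

lemma laplacian_const_sub_norm_sub_sq (a : ℝ) (q x : E) :
    Δ (fun y => a - ‖y - q‖ ^ 2) x = -2 * Module.finrank ℝ E := by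
  let b := stdOrthonormalBasis ℝ E
  have hfderiv (v : E) : (fun y => fderiv ℝ (fun y => a - ‖y - q‖ ^ 2) y v) =
      fun y => -2 * innerSL ℝ v (y - q) := by
    ext y
    rw [(hasFDerivAt_const_sub_norm_sub_sq a q y).fderiv, innerSL_apply_apply, real_inner_comm]
    rfl
  have hfderiv₂ (v : E) : HasFDerivAt (fun y => -2 * innerSL ℝ v (y - q))
      ((-2 : ℝ) • innerSL ℝ v) x :=
    (((innerSL ℝ v).hasFDerivAt).comp x ((hasFDerivAt_id x).sub_const q)).const_mul (-2)
  rw [laplacian_eq_sum_fderiv_fderiv b (contDiff_const_sub_norm_sub_sq a q).contDiffAt]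
  simp_rw [hfderiv, (hfderiv₂ _).fderiv]
  simp [mul_comm]

lemma laplacian_radialBarrier (q : E) (r : ℝ) (k : ℕ) (x : E) :
    Δ (radialBarrier q r (k + 3)) x = (k + 3) * max 0 (r ^ 2 - ‖x - q‖ ^ 2) ^ (k + 1) *
      (4 * (k + 2) * ‖x - q‖ ^ 2 - 2 * Module.finrank ℝ E * max 0 (r ^ 2 - ‖x - q‖ ^ 2)) := by
  have hderiv : deriv (fun t : ℝ => max 0 t ^ (k + 3)) =
      fun t => ((k : ℝ) + 3) * max 0 t ^ (k + 2) := by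
    rw [deriv_max_zero_pow (k + 1)]
    ext t
    push_cast
    ring
  have hg : ContDiff ℝ 2 fun t : ℝ => max 0 t ^ (k + 3) :=
    (contDiff_max_zero_pow (k + 2)).of_le (by norm_cast; omega)
  have hcomp := laplacian_comp (f := fun y => r ^ 2 - ‖y - q‖ ^ 2) (x := x) hg.contDiffAt
    (contDiff_const_sub_norm_sub_sq _ q).contDiffAt
  refine hcomp.trans ?_
  rw [hderiv, deriv_const_mul_field, deriv_max_zero_pow, gradient_const_sub_norm_sub_sq,
    laplacian_const_sub_norm_sub_sq, norm_smul, norm_neg, Real.norm_ofNat]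
  push_cast
  ring

lemma exists_mul_radialBarrier_lt_laplacian (q : E) {t : ℝ} (ht : 0 < t) (r K : ℝ) :
    ∃ k : ℕ, ∀ x ∈ ball q r, x ∉ ball q t →
      K * radialBarrier q r (k + 3) x < Δ (radialBarrier q r (k + 3)) x := by
  obtain ⟨k, hk⟩ := exists_nat_gt
    ((2 * Module.finrank ℝ E * r ^ 2 + |K| * (r ^ 2) ^ 2) / (4 * t ^ 2))
  rw [div_lt_iff₀ (by positivity)] at hk
  refine ⟨k, fun x hxr hxt => ?_⟩
  rw [mem_ball, dist_eq_norm] at hxr hxt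
  have hpos : 0 < r ^ 2 - ‖x - q‖ ^ 2 := sub_pos.2 (by gcongr)
  have htx : t ^ 2 ≤ ‖x - q‖ ^ 2 := by gcongr; exact not_lt.1 hxt
  rw [laplacian_radialBarrier, radialBarrier, max_eq_right hpos.le]
  set ρ := r ^ 2 - ‖x - q‖ ^ 2
  have hρ : ρ ≤ r ^ 2 := sub_le_self _ (sq_nonneg _)
  have hlt : |K| * (r ^ 2) ^ 2 <
      4 * (k + 2) * ‖x - q‖ ^ 2 - 2 * Module.finrank ℝ E * ρ := by
    calc |K| * (r ^ 2) ^ 2 < 4 * (k + 2) * t ^ 2 - 2 * Module.finrank ℝ E * r ^ 2 := by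
          linarith [sq_nonneg t]
      _ ≤ 4 * (k + 2) * ‖x - q‖ ^ 2 - 2 * Module.finrank ℝ E * ρ := by gcongr
  calc K * ρ ^ (k + 3) = ρ ^ (k + 1) * (K * ρ ^ 2) := by ring
    _ ≤ ρ ^ (k + 1) * (|K| * (r ^ 2) ^ 2) := by
        gcongr
        exact le_abs_self K
    _ ≤ (k + 3) * ρ ^ (k + 1) * (|K| * (r ^ 2) ^ 2) := by
        gcongr
        exact le_mul_of_one_le_left (by positivity) (by linarith [k.cast_nonneg (α := ℝ)])
    _ < (k + 3) * ρ ^ (k + 1) *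
        (4 * (k + 2) * ‖x - q‖ ^ 2 - 2 * Module.finrank ℝ E * ρ) := by gcongr

lemma exists_testFunction_mul_le_laplacian {Ω : TopologicalSpace.Opens E} {q : E} {t r : ℝ}
    (ht : 0 < t) (hr : 0 ≤ r) (hrΩ : closedBall q r ⊆ Ω) (K : ℝ) :
    ∃ η : 𝓓^{2}(Ω, ℝ), (∀ x, 0 ≤ η x) ∧ (∀ x ∉ ball q t, K * η x ≤ Δ (η : E → ℝ) x) ∧
      ∀ x ∈ ball q r, x ∉ ball q t → K * η x < Δ (η : E → ℝ) x := by
  obtain ⟨k, hk⟩ := exists_mul_radialBarrier_lt_laplacian q ht r K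
  have hsupp : tsupport (radialBarrier q r (k + 3)) ⊆ closedBall q r :=
    tsupport_radialBarrier_subset q hr (k + 2).succ_ne_zero
  refine ⟨⟨radialBarrier q r (k + 3),
    (contDiff_radialBarrier q r (k + 2)).of_le (by norm_cast; simp),
    (isCompact_closedBall q r).of_isClosed_subset (isClosed_tsupport _) hsupp, hsupp.trans hrΩ⟩,
    fun x => pow_nonneg (le_max_left _ _) _, fun x hxt => ?_, hk⟩
  by_cases hxr : x ∈ ball q r
  · exact (hk x hxr hxt).le
  · have hmax := max_zero_sq_sub_norm_sub_sq_eq_zero hr hxr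
    refine le_of_eq ?_
    calc K * radialBarrier q r (k + 3) x = 0 := by simp [radialBarrier, hmax]
      _ = Δ (radialBarrier q r (k + 3)) x := by simp [laplacian_radialBarrier, hmax]

end Barrier

section UniqueContinuation

variable {E : Type*} [NormedAddCommGroup E] [InnerProductSpace ℝ E] [FiniteDimensional ℝ E]
  [MeasurableSpace E] [BorelSpace E] {Ω : TopologicalSpace.Opens E} {c p : E → ℝ} {K : ℝ}

lemma IsDistribSolutionOn.eqOn_zero_ball (hp : IsDistribSolutionOn Ω c p) (hpc : ContinuousOn p Ω)
    (hp₀ : ∀ x ∈ Ω, 0 ≤ p x) (hc : IntegrableOn c Ω) (hcK : ∀ x ∈ Ω, -K ≤ c x) {q : E} {t r : ℝ}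
    (ht : 0 < t) (hr : 0 ≤ r) (hrΩ : closedBall q r ⊆ Ω) (hpt : EqOn p 0 (ball q t)) :
    EqOn p 0 (ball q r) := by
  obtain ⟨η, hη₀, hη, hη_lt⟩ := exists_testFunction_mul_le_laplacian ht hr hrΩ K
  have hrΩ' : ball q r ⊆ Ω := ball_subset_closedBall.trans hrΩ
  have hle : ∀ x ∈ Ω, Δ (η : E → ℝ) x - K * η x ≤ Δ (η : E → ℝ) x + c x * η x := fun x hx => by
    linarith [mul_le_mul_of_nonneg_right (hcK x hx) (hη₀ x)]
  have hnonneg : ∀ x ∈ Ω, 0 ≤ p x * (Δ (η : E → ℝ) x + c x * η x) := by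
    intro x hx
    by_cases hxt : x ∈ ball q t
    · rw [hpt hxt, Pi.zero_apply, zero_mul]
    · exact mul_nonneg (hp₀ x hx) ((sub_nonneg.2 (hη x hxt)).trans (hle x hx))
  have hae := (setIntegral_eq_zero_iff_of_nonneg_ae
    (ae_restrict_of_forall_mem Ω.isOpen.measurableSet hnonneg)
    (integrableOn_mul_laplacian_add_mul hpc hc η)).1 (hp η)
  refine Measure.eqOn_open_of_ae_eq ?_ isOpen_ball (hpc.mono hrΩ') continuousOn_const (μ := volume)
  filter_upwards [ae_restrict_of_ae_restrict_of_subset hrΩ' hae,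
    ae_restrict_mem measurableSet_ball] with x hx hxr
  by_cases hxt : x ∈ ball q t
  · exact hpt hxt
  · exact (mul_eq_zero.1 hx).resolve_right
      ((sub_pos.2 (hη_lt x hxr hxt)).trans_le (hle x (hrΩ' hxr))).ne'

theorem IsDistribSolutionOn.eqOn_zero_of_eventuallyEq (hp : IsDistribSolutionOn Ω c p)
    (hΩ : IsPreconnected (Ω : Set E)) (hpc : ContinuousOn p Ω) (hp₀ : ∀ x ∈ Ω, 0 ≤ p x)
    (hc : IntegrableOn c Ω) (hcK : ∀ x ∈ Ω, -K ≤ c x) {z : E} (hz : z ∈ Ω) (hpz : p =ᶠ[𝓝 z] 0) :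
    EqOn p 0 Ω := by
  suffices h : (Ω : Set E) ⊆ interior {x | p x = 0} from h.trans interior_subset
  refine hΩ.subset_of_closure_inter_subset isOpen_interior
    ⟨z, hz, mem_interior_iff_mem_nhds.2 hpz⟩ ?_
  rintro y ⟨hyc, hyΩ⟩
  obtain ⟨s, hs, hsΩ⟩ := Metric.isOpen_iff.1 Ω.isOpen y hyΩ
  obtain ⟨q, hq, hyq⟩ := Metric.mem_closure_iff.1 hyc (s / 2) (half_pos hs)
  obtain ⟨t, ht, htq⟩ := Metric.isOpen_iff.1 isOpen_interior q hq
  have hball : closedBall q (s / 2) ⊆ Ω :=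
    (closedBall_subset_ball' (by linarith [dist_comm y q])).trans hsΩ
  have hpq := hp.eqOn_zero_ball hpc hp₀ hc hcK ht (half_pos hs).le hball
    fun x hx => (interior_subset (htq hx) : x ∈ {x | p x = 0})
  exact mem_interior.2 ⟨_, hpq, isOpen_ball, hyq⟩

end UniqueContinuation

section Symmetry

lemma sub_le_deriv_mul_sub {f : ℝ → ℝ} (hf : ConvexOn ℝ univ f) {s : ℝ}
    (hfs : DifferentiableAt ℝ f s) (t : ℝ) : f s - f t ≤ deriv f s * (s - t) := by
  rcases lt_trichotomy s t with h | rfl | h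
  · have hslope := hf.deriv_le_slope (mem_univ s) (mem_univ t) h hfs
    rw [slope_def_field, le_div_iff₀ (sub_pos.2 h)] at hslope
    linarith
  · simp
  · have hslope := hf.slope_le_deriv (mem_univ t) (mem_univ s) h hfs
    rwa [slope_def_field, div_le_iff₀ (sub_pos.2 h)] at hslope

variable {E : Type*} [NormedAddCommGroup E] [InnerProductSpace ℝ E] [FiniteDimensional ℝ E]
  [MeasurableSpace E] [BorelSpace E] {Ω : TopologicalSpace.Opens E} {f : ℝ → ℝ} {u : E → ℝ}

/-- Classical solutions of the Dirichlet problem `-Δ u = f(u)` in `Ω`, `u = 0` on the boundary,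
whose linearized operator `-Δ - f'(u)` has a nonnegative quadratic form. -/
structure IsSemistableSolution (Ω : TopologicalSpace.Opens E) (f : ℝ → ℝ) (u : E → ℝ) :
    Prop where
  contDiffOn : ContDiffOn ℝ 2 u Ω
  continuousOn : ContinuousOn u (closure Ω)
  neg_laplacian_eq : ∀ x ∈ Ω, -Δ u x = f (u x)
  eq_zero_of_mem_frontier : ∀ x ∈ frontier (Ω : Set E), u x = 0
  semistableOn : SemistableOn Ω fun x => deriv f (u x)

namespace IsSemistableSolution

lemma isDirichletSubsolution_sub_comp (hu : IsSemistableSolution Ω f u) (hf : Differentiable ℝ f)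
    (hconv : ConvexOn ℝ univ f) (R : E ≃ₗᵢ[ℝ] E) (hR : R ⁻¹' Ω = Ω) :
    IsDirichletSubsolution Ω (fun x => deriv f (u x)) fun x => u x - u (R x) := by
  have hmaps : MapsTo R Ω Ω := hR.ge
  have hfrontier : R ⁻¹' frontier Ω = frontier Ω :=
    (R.toHomeomorph.preimage_frontier Ω).trans (congrArg frontier hR)
  have huR : ContDiffOn ℝ 2 (u ∘ R) Ω := hu.contDiffOn.comp R.contDiff.contDiffOn hmaps
  refine ⟨hu.contDiffOn.sub huR, hu.continuousOn.sub
    (hu.continuousOn.comp R.continuous.continuousOn (hmaps.closure R.continuous)),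
    fun x hx => ?_, fun x hx _ => ?_⟩
  · have hRx : R x ∈ frontier (Ω : Set E) := hfrontier.ge hx
    rw [hu.eq_zero_of_mem_frontier x hx, hu.eq_zero_of_mem_frontier _ hRx, sub_zero]
  · have hΔ : Δ (fun x => u x - u (R x)) x = Δ u x - Δ u (R x) := by
      rw [← laplacian_comp_linearIsometryEquiv]
      exact (hu.contDiffOn.contDiffAt (Ω.isOpen.mem_nhds hx)).laplacian_sub
        (huR.contDiffAt (Ω.isOpen.mem_nhds hx))
    linarith [sub_le_deriv_mul_sub hconv (hf (u x)) (u (R x)), hu.neg_laplacian_eq x hx,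
      hu.neg_laplacian_eq _ (hmaps hx)]

lemma le_comp_of_involutive (hu : IsSemistableSolution Ω f u) (hf : ContDiff ℝ 1 f)
    (hconv : ConvexOn ℝ univ f) (hΩ : Bornology.IsBounded (Ω : Set E))
    (hΩc : IsPreconnected (Ω : Set E)) {R : E ≃ₗᵢ[ℝ] E} (hR : R ⁻¹' Ω = Ω)
    (hinv : Function.Involutive R) {x : E} (hx : x ∈ Ω) : u x ≤ u (R x) := by
  have hw := hu.isDirichletSubsolution_sub_comp (hf.differentiable one_ne_zero) hconv R hR
  have hcc : ContinuousOn (fun x => deriv f (u x)) (closure Ω) :=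
    hf.continuous_deriv_one.comp_continuousOn hu.continuousOn
  have hcint : IntegrableOn (fun x => deriv f (u x)) Ω :=
    (hcc.integrableOn_compact hΩ.isCompact_closure).mono_set subset_closure
  obtain ⟨K, hK⟩ := hΩ.isCompact_closure.exists_bound_of_continuousOn hcc
  have hwc : ContinuousOn (fun x => u x - u (R x)) Ω := hw.continuousOn.mono subset_closure
  have hRx : R x ∈ Ω := hR.ge hx
  by_contra! hlt
  have hneg : ∀ᶠ y in 𝓝 (R x), u y - u (R y) < 0 :=
    (hwc.continuousAt (Ω.isOpen.mem_nhds hRx)).eventually_lt_const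
      (by simpa only [hinv x, sub_neg] using hlt)
  have hzero := (hw.isDistribSolutionOn_max_zero hΩ hcint hu.semistableOn)
    |>.eqOn_zero_of_eventuallyEq hΩc (continuousOn_const.sup hwc) (fun _ _ => le_max_left _ _)
      hcint (fun y hy => (abs_le.1 (hK y (subset_closure hy))).1) hRx
      (hneg.mono fun _ hy => max_eq_left hy.le) hx
  exact (sub_pos.2 hlt).not_ge (max_eq_left_iff.1 hzero)

lemma le_of_norm_eq (hu : IsSemistableSolution Ω f u) (hf : ContDiff ℝ 1 f)
    (hconv : ConvexOn ℝ univ f) (hΩ : Bornology.IsBounded (Ω : Set E))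
    (hΩc : IsPreconnected (Ω : Set E)) (hrot : ∀ R : E ≃ₗᵢ[ℝ] E, R ⁻¹' Ω = Ω) {x y : E}
    (hx : x ∈ Ω) (hxy : ‖x‖ = ‖y‖) : u x ≤ u y := by
  have h := hu.le_comp_of_involutive hf hconv hΩ hΩc (hrot (Submodule.reflection (ℝ ∙ (x - y))ᗮ))
    (Submodule.reflection_reflection _) hx
  rwa [Submodule.reflection_sub hxy] at h

end IsSemistableSolution

theorem statement8_general (hΩ : Bornology.IsBounded (Ω : Set E))
    (hΩc : IsPreconnected (Ω : Set E)) (hrot : ∀ R : E ≃ₗᵢ[ℝ] E, R ⁻¹' Ω = Ω)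
    (hf : ContDiff ℝ 1 f) (hconv : ConvexOn ℝ univ f) (hu : IsSemistableSolution Ω f u) :
    ∃ v : ℝ → ℝ, ∀ x ∈ Ω, u x = v ‖x‖ := by
  have hfac : Function.FactorsThrough (fun x : Ω => u x) fun x : Ω => ‖(x : E)‖ := fun x y hxy =>
    (hu.le_of_norm_eq hf hconv hΩ hΩc hrot x.2 hxy).antisymm
      (hu.le_of_norm_eq hf hconv hΩ hΩc hrot y.2 hxy.symm)
  exact ⟨_, fun x hx => (hfac.extend_apply 0 ⟨x, hx⟩).symm⟩

end Symmetry

end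

/-- Radial symmetry in a ball: if `B_a ⊂ ℝ^n` (`n = m+3 ≥ 3`) is the open ball of radius `a`
centered at the origin, `f ∈ C¹(ℝ)` is convex and `u` is a positive stable solution of
`-Δu = f(u)` in `B_a` with `u = 0` on `∂B_a`, then there is `v : ℝ → ℝ` with
`u(x) = v(|x|)` on `B_a`. -/
theorem statement8 (m : ℕ) (a : ℝ) (ha : 0 < a)
    (f : ℝ → ℝ) (hf1 : ContDiff ℝ 1 f) (hfconv : ConvexOn ℝ Set.univ f)
    (u : EuclideanSpace ℝ (Fin (m + 3)) → ℝ)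
    (hu2 : ContDiffOn ℝ 2 u (Metric.ball (0 : EuclideanSpace ℝ (Fin (m + 3))) a))
    (huc : ContinuousOn u (closure (Metric.ball (0 : EuclideanSpace ℝ (Fin (m + 3))) a)))
    (hupos : ∀ x ∈ Metric.ball (0 : EuclideanSpace ℝ (Fin (m + 3))) a, 0 < u x)
    (heq : ∀ x ∈ Metric.ball (0 : EuclideanSpace ℝ (Fin (m + 3))) a, -lap u x = f (u x))
    (hbd : ∀ x ∈ frontier (Metric.ball (0 : EuclideanSpace ℝ (Fin (m + 3))) a), u x = 0)
    (hstab : StableOn (Metric.ball (0 : EuclideanSpace ℝ (Fin (m + 3))) a)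
      (fun x => deriv f (u x))) :
    ∃ v : ℝ → ℝ, ∀ x ∈ Metric.ball (0 : EuclideanSpace ℝ (Fin (m + 3))) a, u x = v ‖x‖ := by
  have hball : ∀ R : EuclideanSpace ℝ (Fin (m + 3)) ≃ₗᵢ[ℝ] EuclideanSpace ℝ (Fin (m + 3)),
      R ⁻¹' Metric.ball 0 a = Metric.ball 0 a := fun R => by simp [R.preimage_ball]
  have hu : IsSemistableSolution ⟨Metric.ball 0 a, Metric.isOpen_ball⟩ f u :=
    { contDiffOn := hu2
      continuousOn := huc
      neg_laplacian_eq := fun x hx => by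
        rw [← lap_eq_laplacian (hu2.contDiffAt (Metric.isOpen_ball.mem_nhds hx)), heq x hx]
      eq_zero_of_mem_frontier := hbd
      semistableOn := hstab.semistableOn }
  exact statement8_general Metric.isBounded_ball (convex_ball 0 a).isPreconnected hball hf1 hfconv
    hu
end

section
/- (Serrin's corner lemma.) Let Ω ⊂ ℝⁿ be a domain with the origin o on its boundary, and suppose that near o the boundary ∂Ω consists of two transversally intersecting C² hypersurfaces {ρ = 0} and {σ = 0}, with ρ < 0 and σ < 0 in Ω. Let L be the uniformly elliptic operator Lu = Σ_{i,j} a_{ij}(x) ∂²u/∂x_i∂x_j + Σ_i b_i(x) ∂u/∂x_i + c(x)u with a_{ij} = a_{ji} continuous on the closure of Ω, b_i, c ∈ L^∞(Ω), and Σ a_{ij} ξ_i ξ_j ≥ λ|ξ|² for some λ > 0. Let u ∈ C²(closure of Ω) satisfy u < 0 in Ω, u(o) = 0, and Lu ≥ 0 in Ω. Assume Σ_{i,j} a_{ij} ∂ρ/∂x_i · ∂σ/∂x_j ≥ 0 at o, and if this quantity vanishes at o assume furthermore that a_{ij} ∈ C² near o in the closure of Ω with D(Σ_{i,j} a_{ij}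 ∂ρ/∂x_i · ∂σ/∂x_j) = 0 at o for every first-order derivative D at o tangent to the submanifold {ρ = 0} ∩ {σ = 0}. Then for any direction s at o entering Ω transversally to each of the two hypersurfaces: ∂u/∂s < 0 at o if the inequality Σ a_{ij} ρ_{x_i} σ_{x_j} > 0 is strict at o, while ∂u/∂s < 0 or ∂²u/∂s² < 0 at o in the case of equality. -/
open MeasureTheory Set

/-!
Put `l = -ρ` and `m = -σ`. If `h` is a strict subsolution wherever it is positive in `Ω`, vanishes
at the corner and is negative on the rest of `∂Ω` near it, then the maximum principle, applied to
`u + ε h`, gives `u ≤ -ε h` near the corner; along the ray `t s` this is an upper bound for the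
second-order Taylor polynomial of `u`, so it suffices to find such an `h` with
`h (t s) / t²` bounded below by a positive constant, or tending to infinity. Both barriers
perturb the product `l m`, whose image under the operator is `2 Γ(l, m) = 2 ∑ aᵢⱼ ∂ᵢl ∂ⱼm` up to an
error `O(|x|)`.

* If `Γ(l, m) > 0` at the corner, `h = (l m - μ |x|²) log |x|⁻²` works for small `μ > 0`: the
  logarithm multiplies the gain `2 Γ(l, m)` by an unbounded factor at the price of bounded errors,
  and `h (t s) / t² → ∞` contradicts the existence of a second derivative unless `∂u/∂s < 0`.
* If `Γ(l, m) = 0` at the corner, `h = l m (1 + √l + √m) - |x|³` works: the operator produces the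
  singular term `m / √l + l / √m`, and where `h > 0`, hence `l m ≥ |x|³ / 3`, that term is at least
  of order `|x|^(3/4)` and so dominates all errors, which are `O(|x|)`.
-/

section SerrinCorner

open Filter Topology Asymptotics

section SecondOrderDifferentiability

variable {E F : Type*} [NormedAddCommGroup E] [NormedSpace ℝ E] [NormedAddCommGroup F]
  [NormedSpace ℝ F] {f : E → F} {x : E}

lemma eventually_differentiableAt (hf : ContDiffAt ℝ 2 f x) :
    ∀ᶠ y in 𝓝 x, DifferentiableAt ℝ f y :=
  (hf.eventually (by simp)).mono fun _ h => h.differentiableAt (by simp)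

lemma differentiableAt_fderiv (hf : ContDiffAt ℝ 2 f x) :
    DifferentiableAt ℝ (fderiv ℝ f) x :=
  (hf.fderiv_right (m := 1) (by norm_num)).differentiableAt (by simp)

end SecondOrderDifferentiability

section PartialDerivatives

variable {n : ℕ} {f g : EuclideanSpace ℝ (Fin n) → ℝ} {x : EuclideanSpace ℝ (Fin n)}
  {i j : Fin n}

lemma abs_pd_le : |pd f i x| ≤ ‖fderiv ℝ f x‖ := by
  simpa [pd] using (fderiv ℝ f x).le_opNorm (EuclideanSpace.single i 1)

lemma pd_congr (h : f =ᶠ[𝓝 x] g) : pd f i x = pd g i x := by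
  rw [pd, pd, h.fderiv_eq]

lemma pd_add (hf : DifferentiableAt ℝ f x) (hg : DifferentiableAt ℝ g x) :
    pd (fun y => f y + g y) i x = pd f i x + pd g i x := by
  simp [pd, fderiv_fun_add hf hg]

lemma pd_mul (hf : DifferentiableAt ℝ f x) (hg : DifferentiableAt ℝ g x) :
    pd (fun y => f y * g y) i x = f x * pd g i x + g x * pd f i x := by
  simp [pd, fderiv_fun_mul hf hg]

lemma pd_const_mul (r : ℝ) : pd (fun y => r * f y) i x = r * pd f i x := by
  simp [pd, show (fun y => r * f y) = r • f from rfl, fderiv_const_smul_field]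

lemma pd_comp {φ : ℝ → ℝ} {d : ℝ} (hφ : HasDerivAt φ d (f x)) (hf : DifferentiableAt ℝ f x) :
    pd (fun y => φ (f y)) i x = d * pd f i x := by
  have h : HasFDerivAt (fun y => φ (f y)) (d • fderiv ℝ f x) x :=
    hφ.comp_hasFDerivAt x hf.hasFDerivAt
  simp [pd, h.fderiv]

lemma contDiffAt_pd (hf : ContDiffAt ℝ 2 f x) : ContDiffAt ℝ 1 (pd f i) x :=
  (hf.fderiv_right (by norm_num)).clm_apply contDiffAt_const

lemma differentiableAt_pd (hf : ContDiffAt ℝ 2 f x) : DifferentiableAt ℝ (pd f i) x :=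
  (contDiffAt_pd hf).differentiableAt (by simp)

lemma continuousAt_pd (hf : ContDiffAt ℝ 1 f x) : ContinuousAt (pd f i) x :=
  (hf.continuousAt_fderiv (by simp)).clm_apply continuousAt_const

lemma pd_pd_eq (hf : ContDiffAt ℝ 2 f x) :
    pd (pd f i) j x
      = fderiv ℝ (fderiv ℝ f) x (EuclideanSpace.single j 1) (EuclideanSpace.single i 1) := by
  rw [pd, show pd f i = fun y => fderiv ℝ f y (EuclideanSpace.single i 1) from rfl,
    fderiv_clm_apply (differentiableAt_fderiv hf) (differentiableAt_const _)]
  simp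

lemma pd_pd_add (hf : ContDiffAt ℝ 2 f x) (hg : ContDiffAt ℝ 2 g x) :
    pd (pd (fun y => f y + g y) i) j x = pd (pd f i) j x + pd (pd g i) j x := by
  rw [← pd_add (differentiableAt_pd hf) (differentiableAt_pd hg)]
  refine pd_congr ?_
  filter_upwards [eventually_differentiableAt hf,
    eventually_differentiableAt hg] with y hfy hgy
  exact pd_add hfy hgy

lemma pd_pd_mul (hf : ContDiffAt ℝ 2 f x) (hg : ContDiffAt ℝ 2 g x) :
    pd (pd (fun y => f y * g y) i) j x = f x * pd (pd g i) j x + g x * pd (pd f i) j x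
      + (pd f i x * pd g j x + pd f j x * pd g i x) := by
  have hpd : pd (fun y => f y * g y) i =ᶠ[𝓝 x] fun y => f y * pd g i y + g y * pd f i y := by
    filter_upwards [eventually_differentiableAt hf,
      eventually_differentiableAt hg] with y hfy hgy
    exact pd_mul hfy hgy
  have hf' := hf.differentiableAt (by simp)
  have hg' := hg.differentiableAt (by simp)
  have hfi : DifferentiableAt ℝ (pd f i) x := differentiableAt_pd hf
  have hgi : DifferentiableAt ℝ (pd g i) x := differentiableAt_pd hg
  rw [pd_congr hpd, pd_add (hf'.fun_mul hgi) (hg'.fun_mul hfi), pd_mul hf' hgi, pd_mul hg' hfi]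
  ring

lemma pd_pd_const_mul (r : ℝ) : pd (pd (fun y => r * f y) i) j x = r * pd (pd f i) j x := by
  rw [← pd_const_mul]
  exact pd_congr (.of_forall fun y => pd_const_mul r)

lemma pd_pd_comp {φ φ' : ℝ → ℝ} {d : ℝ} (hφ : ∀ᶠ t in 𝓝 (f x), HasDerivAt φ (φ' t) t)
    (hφ' : HasDerivAt φ' d (f x)) (hf : ContDiffAt ℝ 2 f x) :
    pd (pd (fun y => φ (f y)) i) j x
      = φ' (f x) * pd (pd f i) j x + d * (pd f i x * pd f j x) := by
  have hpd : pd (fun y => φ (f y)) i =ᶠ[𝓝 x] fun y => φ' (f y) * pd f i y := by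
    filter_upwards [eventually_differentiableAt hf,
      hf.continuousAt.eventually hφ] with y hfy hφy
    exact pd_comp hφy hfy
  have hf' := hf.differentiableAt (by simp)
  rw [pd_congr hpd, pd_mul (hφ'.differentiableAt.fun_comp' x hf') (differentiableAt_pd hf),
    pd_comp hφ' hf']
  ring

end PartialDerivatives

/-- The carré du champ `Γ(f, g) = ∑ Aᵢⱼ ∂ᵢf ∂ⱼg` of a second-order operator with principal
coefficients `A`; it measures how far the operator is from being a derivation. -/
noncomputable def carreDuChamp {n : ℕ} (A : Fin n → Fin n → ℝ)
    (f g : EuclideanSpace ℝ (Fin n) → ℝ) (x : EuclideanSpace ℝ (Fin n)) : ℝ :=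
  ∑ i, ∑ j, A i j * pd f i x * pd g j x

/-- The second-order operator without zeroth-order term `∑ Aᵢⱼ ∂ⱼ∂ᵢf + ∑ βᵢ ∂ᵢf`. Its coefficients
are frozen numbers: an operator with variable coefficients is `diffusionOp (a x) (b x) f x`. -/
noncomputable def diffusionOp {n : ℕ} (A : Fin n → Fin n → ℝ) (β : Fin n → ℝ)
    (f : EuclideanSpace ℝ (Fin n) → ℝ) (x : EuclideanSpace ℝ (Fin n)) : ℝ :=
  (∑ i, ∑ j, A i j * pd (pd f i) j x) + ∑ i, β i * pd f i x

section DiffusionOp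

variable {n : ℕ} {A : Fin n → Fin n → ℝ} {β : Fin n → ℝ}
  {f g : EuclideanSpace ℝ (Fin n) → ℝ} {x : EuclideanSpace ℝ (Fin n)}

lemma carreDuChamp_comm (hA : ∀ i j, A i j = A j i) :
    carreDuChamp A f g x = carreDuChamp A g f x := by
  rw [carreDuChamp, Finset.sum_comm, carreDuChamp]
  simp only [hA, mul_right_comm]

lemma carreDuChamp_comp_left {φ : ℝ → ℝ} {d : ℝ} (hφ : HasDerivAt φ d (f x))
    (hf : DifferentiableAt ℝ f x) :
    carreDuChamp A (fun y => φ (f y)) g x = d * carreDuChamp A f g x := by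
  simp only [carreDuChamp, pd_comp hφ hf, Finset.mul_sum]
  exact Finset.sum_congr rfl fun i _ => Finset.sum_congr rfl fun j _ => by ring

lemma le_carreDuChamp_self {lam : ℝ}
    (hA : ∀ ξ : EuclideanSpace ℝ (Fin n), lam * ‖ξ‖ ^ 2 ≤ ∑ i, ∑ j, A i j * ξ i * ξ j) :
    lam * ‖fderiv ℝ f x‖ ^ 2 ≤ carreDuChamp A f f x := by
  have hpd : ∀ i, gradient f x i = pd f i x := fun i => by
    rw [pd, ← inner_gradient_left, EuclideanSpace.inner_single_right]
    simp
  have hnorm : ‖gradient f x‖ = ‖fderiv ℝ f x‖ := LinearIsometryEquiv.norm_map _ _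
  simpa only [carreDuChamp, hpd, hnorm] using hA (gradient f x)

lemma diffusionOp_add (hf : ContDiffAt ℝ 2 f x) (hg : ContDiffAt ℝ 2 g x) :
    diffusionOp A β (fun y => f y + g y) x = diffusionOp A β f x + diffusionOp A β g x := by
  simp only [diffusionOp, pd_pd_add hf hg,
    pd_add (hf.differentiableAt (by simp)) (hg.differentiableAt (by simp)), mul_add,
    Finset.sum_add_distrib]
  ring

lemma diffusionOp_const_mul (r : ℝ) :
    diffusionOp A β (fun y => r * f y) x = r * diffusionOp A β f x := by
  simp only [diffusionOp, pd_pd_const_mul, pd_const_mul, mul_left_comm _ r, ← Finset.mul_sum,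
    mul_add]

lemma diffusionOp_sub (hf : ContDiffAt ℝ 2 f x) (hg : ContDiffAt ℝ 2 g x) :
    diffusionOp A β (fun y => f y - g y) x = diffusionOp A β f x - diffusionOp A β g x := by
  have hg' : ContDiffAt ℝ 2 (fun y => -1 * g y) x := contDiffAt_const.mul hg
  have hsub : (fun y => f y - g y) = fun y => f y + -1 * g y := by ext; ring
  rw [hsub, diffusionOp_add hf hg', diffusionOp_const_mul]
  ring

lemma diffusionOp_mul (hA : ∀ i j, A i j = A j i) (hf : ContDiffAt ℝ 2 f x)
    (hg : ContDiffAt ℝ 2 g x) :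
    diffusionOp A β (fun y => f y * g y) x
      = f x * diffusionOp A β g x + g x * diffusionOp A β f x + 2 * carreDuChamp A f g x := by
  rw [two_mul]
  nth_rw 2 [carreDuChamp_comm hA]
  simp only [diffusionOp, carreDuChamp, pd_pd_mul hf hg,
    pd_mul (hf.differentiableAt (by simp)) (hg.differentiableAt (by simp)), mul_add,
    Finset.sum_add_distrib, Finset.mul_sum]
  have hcross : ∀ i j, A i j * (pd f j x * pd g i x) = A i j * pd g i x * pd f j x :=
    fun i j => by ring
  simp only [hcross, mul_left_comm, mul_assoc]
  ring

lemma diffusionOp_comp {φ φ' : ℝ → ℝ} {d : ℝ} (hφ : ∀ᶠ t in 𝓝 (f x), HasDerivAt φ (φ' t) t)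
    (hφ' : HasDerivAt φ' d (f x)) (hf : ContDiffAt ℝ 2 f x) :
    diffusionOp A β (fun y => φ (f y)) x
      = φ' (f x) * diffusionOp A β f x + d * carreDuChamp A f f x := by
  simp only [diffusionOp, carreDuChamp, pd_pd_comp hφ hφ' hf,
    pd_comp hφ.self_of_nhds (hf.differentiableAt (by simp)), mul_add, Finset.mul_sum,
    Finset.sum_add_distrib]
  simp only [mul_left_comm, mul_assoc]
  ring

end DiffusionOp

section CoefficientBounds

variable {n : ℕ} {F : Filter (EuclideanSpace ℝ (Fin n))}
  {a : EuclideanSpace ℝ (Fin n) → Fin n → Fin n → ℝ}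
  {b : EuclideanSpace ℝ (Fin n) → Fin n → ℝ} {f g : EuclideanSpace ℝ (Fin n) → ℝ}

lemma carreDuChamp_isBigO {φ ψ : EuclideanSpace ℝ (Fin n) → ℝ}
    (ha : ∀ i j, (fun x => a x i j) =O[F] (fun _ => (1 : ℝ))) (hf : fderiv ℝ f =O[F] φ)
    (hg : fderiv ℝ g =O[F] ψ) :
    (fun x => carreDuChamp (a x) f g x) =O[F] fun x => φ x * ψ x := by
  refine IsBigO.fun_sum fun i _ => IsBigO.fun_sum fun j _ => ?_
  have hfi : pd f i =O[F] φ := (isBigO_of_le F fun x => abs_pd_le).trans hf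
  have hgj : pd g j =O[F] ψ := (isBigO_of_le F fun x => abs_pd_le).trans hg
  simpa [mul_assoc] using (ha i j).mul (hfi.mul hgj)

lemma diffusionOp_isBigO_one {x₀ : EuclideanSpace ℝ (Fin n)} (hF : F ≤ 𝓝 x₀)
    (ha : ∀ i j, (fun x => a x i j) =O[F] (fun _ => (1 : ℝ)))
    (hb : ∀ i, (fun x => b x i) =O[F] (fun _ => (1 : ℝ))) (hf : ContDiffAt ℝ 2 f x₀) :
    (fun x => diffusionOp (a x) (b x) f x) =O[F] (fun _ => (1 : ℝ)) := by
  have hpd : ∀ i, pd f i =O[F] (fun _ => (1 : ℝ)) := fun i =>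
    ((continuousAt_pd (hf.of_le (by norm_num))).mono_left hF).isBigO_one ℝ
  have hpd_pd : ∀ i j, pd (pd f i) j =O[F] (fun _ => (1 : ℝ)) := fun i j =>
    ((continuousAt_pd (contDiffAt_pd hf)).mono_left hF).isBigO_one ℝ
  refine .add (.fun_sum fun i _ => .fun_sum fun j _ => ?_) (.fun_sum fun i _ => ?_)
  · simpa using (ha i j).mul (hpd_pd i j)
  · simpa using (hb i).mul (hpd i)

end CoefficientBounds

section MaximumPrinciple

lemma deriv_deriv_nonpos_of_isLocalMax {f : ℝ → ℝ} {t : ℝ} (hmax : IsLocalMax f t)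
    (hf : ContinuousAt f t) : deriv (deriv f) t ≤ 0 := by
  by_contra! hpos
  have hmin : IsLocalMin f t := isLocalMin_of_deriv_deriv_pos hpos hmax.deriv_eq_zero hf
  have hconst : f =ᶠ[𝓝 t] fun _ => f t :=
    hmax.and hmin |>.mono fun _ h => le_antisymm h.1 h.2
  simp [hconst.deriv.deriv_eq] at hpos

lemma fderiv_fderiv_apply_self_nonpos_of_isLocalMax {F : Type*} [NormedAddCommGroup F]
    [NormedSpace ℝ F] {f : F → ℝ} {x : F} (hmax : IsLocalMax f x) (hf : ContDiffAt ℝ 2 f x)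
    (v : F) : fderiv ℝ (fderiv ℝ f) x v v ≤ 0 := by
  have hline : ∀ t, HasDerivAt (fun t : ℝ => x + t • v) v t := fun t => by
    simpa using ((hasDerivAt_id t).smul_const v).const_add x
  have hline0 : Tendsto (fun t : ℝ => x + t • v) (𝓝 0) (𝓝 x) := by
    simpa using (hline 0).continuousAt.tendsto
  have hderiv : deriv (fun t : ℝ => f (x + t • v)) =ᶠ[𝓝 0] fun t => fderiv ℝ f (x + t • v) v := by
    filter_upwards [hline0.eventually (hf.eventually (by simp))] with t ht
    exact ((ht.differentiableAt (by simp)).hasFDerivAt.comp_hasDerivAt t (hline t)).deriv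
  have hderiv2 : HasDerivAt (fun t : ℝ => fderiv ℝ f (x + t • v) v)
      (fderiv ℝ (fderiv ℝ f) x v v) 0 := by
    have h : HasFDerivAt (fderiv ℝ f) (fderiv ℝ (fderiv ℝ f) x) x :=
      (differentiableAt_fderiv hf).hasFDerivAt
    have hv : HasDerivAt (fun t : ℝ => fderiv ℝ f (x + t • v)) (fderiv ℝ (fderiv ℝ f) x v) 0 :=
      h.comp_hasDerivAt_of_eq 0 (hline 0) (by simp)
    simpa using hv.clm_apply (hasDerivAt_const (0 : ℝ) v)
  have hmax0 : IsLocalMax (fun t : ℝ => f (x + t • v)) 0 := by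
    simpa [IsLocalMax, IsMaxFilter] using hline0.eventually hmax
  rw [← hderiv2.deriv, ← hderiv.deriv_eq]
  refine deriv_deriv_nonpos_of_isLocalMax hmax0 ?_
  exact ContinuousAt.comp (g := f) (by simpa using hf.continuousAt) (hline 0).continuousAt

variable {n : ℕ} {A : Fin n → Fin n → ℝ} {β : Fin n → ℝ}

lemma exists_eq_sum_mul_of_nonneg (hA : ∀ i j, A i j = A j i)
    (hA0 : ∀ ξ : EuclideanSpace ℝ (Fin n), 0 ≤ ∑ i, ∑ j, A i j * ξ i * ξ j) :
    ∃ (m : ℕ) (V : Fin m → EuclideanSpace ℝ (Fin n)), ∀ i j, A i j = ∑ k, V k i * V k j := by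
  have hpsd : (Matrix.of A).PosSemidef := by
    refine Matrix.PosSemidef.of_dotProduct_mulVec_nonneg ?_ fun ξ => ?_
    · exact Matrix.IsHermitian.ext fun i j => hA j i
    · refine (hA0 (WithLp.toLp 2 ξ)).trans_eq ?_
      simp [dotProduct, Matrix.mulVec, Finset.mul_sum, mul_left_comm, mul_comm]
  obtain ⟨m, V, hV⟩ := Matrix.posSemidef_iff_eq_sum_vecMulVec.1 hpsd
  refine ⟨m, fun k => WithLp.toLp 2 (V k), fun i j => ?_⟩
  simpa [Matrix.sum_apply, Matrix.vecMulVec_apply] using congrFun (congrFun hV i) j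

lemma diffusionOp_nonpos_of_isLocalMax {f : EuclideanSpace ℝ (Fin n) → ℝ}
    {x : EuclideanSpace ℝ (Fin n)} (hA : ∀ i j, A i j = A j i)
    (hA0 : ∀ ξ : EuclideanSpace ℝ (Fin n), 0 ≤ ∑ i, ∑ j, A i j * ξ i * ξ j)
    (hmax : IsLocalMax f x) (hf : ContDiffAt ℝ 2 f x) : diffusionOp A β f x ≤ 0 := by
  obtain ⟨m, V, hV⟩ := exists_eq_sum_mul_of_nonneg hA hA0
  have hfirst : ∀ i, pd f i x = 0 := fun i => by simp [pd, hmax.fderiv_eq_zero]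
  have hbilin : ∀ v, fderiv ℝ (fderiv ℝ f) x v v = ∑ i, ∑ j, v i * v j * pd (pd f i) j x := by
    intro v
    conv_lhs => rw [← (EuclideanSpace.basisFun (Fin n) ℝ).sum_repr v]
    simp only [pd_pd_eq hf]
    simp [Finset.mul_sum, mul_assoc]
  calc diffusionOp A β f x = ∑ k, fderiv ℝ (fderiv ℝ f) x (V k) (V k) := by
        simp only [diffusionOp, hfirst, mul_zero, Finset.sum_const_zero, add_zero, hbilin, hV,
          Finset.sum_mul]
        exact (Finset.sum_congr rfl fun _ _ => Finset.sum_comm).trans Finset.sum_comm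
    _ ≤ 0 := Finset.sum_nonpos fun k _ => fderiv_fderiv_apply_self_nonpos_of_isLocalMax hmax hf _

lemma eventually_forall_add_mul_nonpos {X : Type*} [TopologicalSpace X] {S : Set X}
    {u h : X → ℝ} (hS : IsCompact S) (hu : ContinuousOn u S) (hh : ContinuousOn h S)
    (hle : ∀ x ∈ S, u x ≤ 0) (hlt : ∀ x ∈ S, 0 ≤ h x → u x < 0) :
    ∀ᶠ ε in 𝓝[>] (0 : ℝ), ∀ x ∈ S, u x + ε * h x ≤ 0 := by
  suffices H : ∀ᶠ ε in 𝓝 (0 : ℝ), ∀ x ∈ S, x ∈ S → 0 < ε → u x + ε * h x ≤ 0 by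
    filter_upwards [H.filter_mono nhdsWithin_le_nhds, self_mem_nhdsWithin] with ε hε hpos x hx
    exact hε x hx hx hpos
  refine hS.eventually_forall_of_forall_eventually fun x hx => ?_
  suffices H : ∀ᶠ p in 𝓝 (0 : ℝ) ×ˢ 𝓝[S] x, p.2 ∈ S → 0 < p.1 → u p.2 + p.1 * h p.2 ≤ 0 by
    rw [← nhdsWithin_univ, ← nhdsWithin_prod_eq, eventually_nhdsWithin_iff] at H
    exact H.mono fun p hp hpS => hp ⟨mem_univ _, hpS⟩ hpS
  have hu' : Tendsto (fun p : ℝ × X => u p.2) (𝓝 0 ×ˢ 𝓝[S] x) (𝓝 (u x)) :=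
    (hu x hx).tendsto.comp tendsto_snd
  have hh' : Tendsto (fun p : ℝ × X => h p.2) (𝓝 0 ×ˢ 𝓝[S] x) (𝓝 (h x)) :=
    (hh x hx).tendsto.comp tendsto_snd
  rcases lt_or_ge (h x) 0 with hneg | hnonneg
  · filter_upwards [hh'.eventually_lt_const hneg] with p hp hpS hpos
    nlinarith [hle p.2 hpS]
  · have hlim := hu'.add (tendsto_fst.mul hh')
    rw [zero_mul, add_zero] at hlim
    filter_upwards [hlim.eventually_lt_const (hlt x hx hnonneg)] with p hp _ _
    exact hp.le

end MaximumPrinciple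

section Barrier

variable {n : ℕ} {Ω : Set (EuclideanSpace ℝ (Fin n))}
  {a : EuclideanSpace ℝ (Fin n) → Fin n → Fin n → ℝ}
  {b : EuclideanSpace ℝ (Fin n) → Fin n → ℝ} {c u h : EuclideanSpace ℝ (Fin n) → ℝ} {M : ℝ}

/-- A barrier at the boundary point `0` of `Ω`: near `0` it is negative on `∂Ω ∖ {0}`, and where it
is positive in `Ω` it is a strict subsolution of `∑ aᵢⱼ ∂ᵢ∂ⱼ + ∑ bᵢ ∂ᵢ - M`. Nothing is asked of it
at the points of `Ω` where it is nonpositive, so it need not be differentiable there. -/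
structure IsBarrier (Ω : Set (EuclideanSpace ℝ (Fin n)))
    (a : EuclideanSpace ℝ (Fin n) → Fin n → Fin n → ℝ)
    (b : EuclideanSpace ℝ (Fin n) → Fin n → ℝ) (M : ℝ)
    (h : EuclideanSpace ℝ (Fin n) → ℝ) : Prop where
  continuous : Continuous h
  zero : h 0 = 0
  frontier_neg : ∀ᶠ x in 𝓝[frontier Ω] 0, x ≠ 0 → h x < 0
  subsolution : ∀ᶠ x in 𝓝[Ω] 0,
    0 < h x → ContDiffAt ℝ 2 h x ∧ M * h x < diffusionOp (a x) (b x) h x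

lemma nonpos_of_mem_closure {X : Type*} [TopologicalSpace X] {Ω : Set X} {u : X → ℝ}
    (hu : ContinuousOn u (closure Ω)) (huneg : ∀ x ∈ Ω, u x < 0) :
    ∀ x ∈ closure Ω, u x ≤ 0 := by
  intro x hx
  have := mem_closure_iff_nhdsWithin_neBot.1 hx
  refine le_of_tendsto ((hu x hx).mono subset_closure) ?_
  filter_upwards [self_mem_nhdsWithin] with y hy using (huneg y hy).le

lemma add_mul_nonpos_of_isLocalMax {A : Fin n → Fin n → ℝ} {β : Fin n → ℝ} {γ ε : ℝ}
    {x : EuclideanSpace ℝ (Fin n)} (hA : ∀ i j, A i j = A j i)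
    (hA0 : ∀ ξ : EuclideanSpace ℝ (Fin n), 0 ≤ ∑ i, ∑ j, A i j * ξ i * ξ j)
    (hγ : |γ| ≤ M) (hε : 0 < ε) (hux : u x ≤ 0) (hu : ContDiffAt ℝ 2 u x)
    (hh : ContDiffAt ℝ 2 h x) (hLu : 0 ≤ diffusionOp A β u x + γ * u x)
    (hLh : M * h x < diffusionOp A β h x) (hmax : IsLocalMax (fun y => u y + ε * h y) x) :
    u x + ε * h x ≤ 0 := by
  have hεh : ContDiffAt ℝ 2 (fun y => ε * h y) x := contDiffAt_const.mul hh
  have hL := diffusionOp_nonpos_of_isLocalMax (β := β) hA hA0 hmax (hu.add hεh)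
  rw [diffusionOp_add hu hεh, diffusionOp_const_mul] at hL
  have hγu : γ * u x ≤ -(M * u x) := by nlinarith [neg_abs_le γ]
  have hM : 0 ≤ M := (abs_nonneg γ).trans hγ
  have hMw : M * (u x + ε * h x) < 0 := by nlinarith
  exact (neg_of_mul_neg_right hMw hM).le

lemma exists_forall_sphere_add_mul_nonpos {r : ℝ} (hr : 0 < r) (hΩ : IsOpen Ω)
    (hu : ContinuousOn u (closure Ω)) (huneg : ∀ x ∈ Ω, u x < 0) (hh : Continuous h)
    (hfront : ∀ x ∈ Metric.closedBall 0 r, x ∈ frontier Ω → x ≠ 0 → h x < 0) :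
    ∃ ε > 0, ∀ x ∈ closure Ω ∩ Metric.sphere 0 r, u x + ε * h x ≤ 0 := by
  have hcompact : IsCompact (closure Ω ∩ Metric.sphere 0 r) :=
    (isCompact_sphere 0 r).inter_left isClosed_closure
  have hlt : ∀ x ∈ closure Ω ∩ Metric.sphere 0 r, 0 ≤ h x → u x < 0 := by
    rintro x ⟨hx, hxr⟩ hhx
    have hx0 : x ≠ 0 := ne_zero_of_mem_sphere hr.ne' ⟨x, hxr⟩
    by_contra! hux
    have hxΩ : x ∉ Ω := fun hxΩ => (huneg x hxΩ).not_ge hux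
    have hxf : x ∈ frontier Ω := ⟨hx, by rwa [hΩ.interior_eq]⟩
    exact (hfront x (Metric.sphere_subset_closedBall hxr) hxf hx0).not_ge hhx
  have hsmall := eventually_forall_add_mul_nonpos hcompact (hu.mono inter_subset_left)
    hh.continuousOn (fun x hx => nonpos_of_mem_closure hu huneg x hx.1) hlt
  exact (hsmall.and self_mem_nhdsWithin).exists.imp fun ε hε => ⟨hε.2, hε.1⟩

lemma IsBarrier.eventually_nonpos_of_isLocalMaxOn (hh : IsBarrier Ω a b M h) (hΩ : IsOpen Ω)
    (hasym : ∀ x i j, a x i j = a x j i)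
    (hell : ∀ x ∈ Ω, ∀ ξ : EuclideanSpace ℝ (Fin n), 0 ≤ ∑ i, ∑ j, a x i j * ξ i * ξ j)
    (hc : ∀ x ∈ Ω, |c x| ≤ M) (hu : ContinuousOn u (closure Ω)) (hu2 : ContDiffOn ℝ 2 u Ω)
    (huneg : ∀ x ∈ Ω, u x < 0) (hLu : ∀ x ∈ Ω, 0 ≤ diffusionOp (a x) (b x) u x + c x * u x) :
    ∀ᶠ x in 𝓝 0, x ∈ closure Ω → ∀ ε > 0,
      IsLocalMaxOn (fun y => u y + ε * h y) (closure Ω) x → u x + ε * h x ≤ 0 := by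
  have hu0 := nonpos_of_mem_closure hu huneg
  filter_upwards [eventually_nhdsWithin_iff.1 hh.frontier_neg,
    eventually_nhdsWithin_iff.1 hh.subsolution] with x hfront hsub hx ε hε hmax
  by_contra! hpos
  have hhx : 0 < h x := pos_of_mul_pos_right (by linarith [hu0 x hx]) hε.le
  have hxΩ : x ∈ Ω := by
    by_contra hxΩ
    have hx0 : x ≠ 0 := fun hx0 => hhx.ne' (hx0 ▸ hh.zero)
    exact (hfront ⟨hx, by rwa [hΩ.interior_eq]⟩ hx0).not_gt hhx
  obtain ⟨hh2, hLh⟩ := hsub hxΩ hhx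
  have hmax' : IsLocalMax (fun y => u y + ε * h y) x :=
    hmax.isLocalMax (mem_of_superset (hΩ.mem_nhds hxΩ) subset_closure)
  exact hpos.not_ge (add_mul_nonpos_of_isLocalMax (hasym x) (hell x hxΩ) (hc x hxΩ) hε
    (hu0 x hx) (hu2.contDiffAt (hΩ.mem_nhds hxΩ)) hh2 (hLu x hxΩ) hLh hmax')

theorem IsBarrier.exists_le_neg_mul (hh : IsBarrier Ω a b M h) (hΩ : IsOpen Ω)
    (hasym : ∀ x i j, a x i j = a x j i)
    (hell : ∀ x ∈ Ω, ∀ ξ : EuclideanSpace ℝ (Fin n), 0 ≤ ∑ i, ∑ j, a x i j * ξ i * ξ j)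
    (hc : ∀ x ∈ Ω, |c x| ≤ M) (hu : ContinuousOn u (closure Ω)) (hu2 : ContDiffOn ℝ 2 u Ω)
    (huneg : ∀ x ∈ Ω, u x < 0) (hLu : ∀ x ∈ Ω, 0 ≤ diffusionOp (a x) (b x) u x + c x * u x) :
    ∃ ε > 0, ∀ᶠ x in 𝓝[Ω] 0, u x ≤ -(ε * h x) := by
  obtain ⟨r, hr, hnear⟩ := Metric.nhds_basis_closedBall.eventually_iff.1
    ((eventually_nhdsWithin_iff.1 hh.frontier_neg).and
      (hh.eventually_nonpos_of_isLocalMaxOn hΩ hasym hell hc hu hu2 huneg hLu))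
  obtain ⟨ε, hε, hsphere⟩ := exists_forall_sphere_add_mul_nonpos hr hΩ hu huneg hh.continuous
    fun x hx => (hnear hx).1
  have hcompact : IsCompact (closure Ω ∩ Metric.closedBall 0 r) :=
    (isCompact_closedBall 0 r).inter_left isClosed_closure
  have hcont : ContinuousOn (fun x => u x + ε * h x) (closure Ω ∩ Metric.closedBall 0 r) :=
    (hu.mono inter_subset_left).add (hh.continuous.const_mul ε).continuousOn
  refine ⟨ε, hε, ?_⟩
  filter_upwards [self_mem_nhdsWithin,
    nhdsWithin_le_nhds (Metric.closedBall_mem_nhds 0 hr)] with x hxΩ hxr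
  have hx : x ∈ closure Ω ∩ Metric.closedBall 0 r := ⟨subset_closure hxΩ, hxr⟩
  obtain ⟨y, hy, hmax⟩ := hcompact.exists_isMaxOn ⟨x, hx⟩ hcont
  have hxy : u x + ε * h x ≤ u y + ε * h y := hmax hx
  suffices hy_nonpos : u y + ε * h y ≤ 0 by linarith
  rcases (mem_closedBall_zero_iff.1 hy.2).eq_or_lt with hyr | hyr
  · exact hsphere y ⟨hy.1, mem_sphere_zero_iff_norm.2 hyr⟩
  · refine (hnear hy.2).2 hy.1 ε hε ?_
    filter_upwards [self_mem_nhdsWithin,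
      nhdsWithin_le_nhds (Metric.isOpen_ball.mem_nhds (mem_ball_zero_iff.2 hyr))] with z hz hzr
    exact hmax ⟨hz, Metric.ball_subset_closedBall hzr⟩

end Barrier

section Calculus

lemma isBigO_norm_of_differentiableAt {E F : Type*} [NormedAddCommGroup E] [NormedSpace ℝ E]
    [NormedAddCommGroup F] [NormedSpace ℝ F] {f : E → F} (hf : DifferentiableAt ℝ f 0)
    (h0 : f 0 = 0) : f =O[𝓝 0] fun x => ‖x‖ := by
  simpa [h0] using hf.isBigO_sub.norm_right

lemma hasDerivAt_mul_sqrt {t : ℝ} (ht : 0 < t) :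
    HasDerivAt (fun t => t * √t) (3 / 2 * √t) t := by
  refine ((hasDerivAt_id t).mul (Real.hasDerivAt_sqrt ht.ne')).congr_deriv ?_
  have hsq := Real.mul_self_sqrt ht.le
  simp only [id]
  field_simp
  nlinarith

lemma hasDerivAt_const_mul_sqrt {t : ℝ} (ht : 0 < t) :
    HasDerivAt (fun t => 3 / 2 * √t) (3 / 4 / √t) t := by
  refine ((Real.hasDerivAt_sqrt ht.ne').const_mul (3 / 2)).congr_deriv ?_
  field_simp
  norm_num

end Calculus

/-- The barrier `l m (1 + √l + √m) - |x|³` for the case in which the two faces `{l = 0}` and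
`{m = 0}` of the corner are conormally orthogonal at `0`. -/
noncomputable def cornerBarrier {E : Type*} [NormedAddCommGroup E] (l m : E → ℝ) (x : E) : ℝ :=
  l x * m x * (1 + √(l x) + √(m x)) - ‖x‖ ^ 3

section CornerBarrierRegularity

variable {E : Type*} [NormedAddCommGroup E] {l m : E → ℝ} {x : E}

lemma cornerBarrier_eq_mul_sqrt :
    cornerBarrier l m = fun y => l y * m y + (l y * √(l y)) * m y + l y * (m y * √(m y))
      - ‖y‖ ^ 2 * √(‖y‖ ^ 2) := by
  ext y
  rw [cornerBarrier, Real.sqrt_sq (norm_nonneg y)]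
  ring

lemma contDiffAt_mul_sqrt [NormedSpace ℝ E] (hl : ContDiffAt ℝ 2 l x) (hlx : 0 < l x) :
    ContDiffAt ℝ 2 (fun y => l y * √(l y)) x :=
  hl.mul (hl.sqrt hlx.ne')

lemma contDiffAt_cornerBarrier [InnerProductSpace ℝ E] (hl : ContDiffAt ℝ 2 l x)
    (hm : ContDiffAt ℝ 2 m x) (hlx : 0 < l x) (hmx : 0 < m x) (hx : x ≠ 0) :
    ContDiffAt ℝ 2 (cornerBarrier l m) x := by
  rw [cornerBarrier_eq_mul_sqrt]
  have hq : ContDiffAt ℝ 2 (fun y => ‖y‖ ^ 2) x := (contDiff_norm_sq ℝ).contDiffAt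
  exact (((hl.mul hm).add ((contDiffAt_mul_sqrt hl hlx).mul hm)).add
    (hl.mul (contDiffAt_mul_sqrt hm hmx))).sub
    (contDiffAt_mul_sqrt hq (by positivity))

lemma cornerBarrier_isBigO [NormedSpace ℝ E] (hl : ContDiff ℝ 2 l) (hm : ContDiff ℝ 2 m)
    (hl0 : l 0 = 0) : cornerBarrier l m =O[𝓝 0] fun x => ‖x‖ := by
  have hlc := hl.continuous
  have hmc := hm.continuous
  have hbdd : ∀ {f : E → ℝ}, Continuous f → f =O[𝓝 0] (fun _ => (1 : ℝ)) := fun hf =>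
    hf.continuousAt.isBigO_one ℝ
  have hprod : (fun x => l x * (m x * (1 + √(l x) + √(m x)))) =O[𝓝 0] fun x => ‖x‖ := by
    simpa using (isBigO_norm_of_differentiableAt (hl.differentiable (by simp) 0) hl0).mul
      (hbdd (by fun_prop : Continuous fun x => m x * (1 + √(l x) + √(m x))))
  have hcube : (fun x : E => ‖x‖ * ‖x‖ ^ 2) =O[𝓝 0] fun x => ‖x‖ := by
    simpa using (isBigO_refl (fun x => ‖x‖) (𝓝 0)).mul
      (hbdd (by fun_prop : Continuous fun x => ‖x‖ ^ 2))
  refine (hprod.sub hcube).congr_left fun x => ?_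
  rw [cornerBarrier]
  ring

lemma norm_pow_three_le_of_cornerBarrier_pos (hl : 0 < l x) (hm : 0 < m x)
    (hl1 : l x ≤ 1) (hm1 : m x ≤ 1) (hpos : 0 < cornerBarrier l m x) :
    ‖x‖ ^ 3 ≤ 3 * (l x * m x) := by
  have hsqrt : 1 + √(l x) + √(m x) ≤ 3 := by
    linarith [Real.sqrt_le_one.2 hl1, Real.sqrt_le_one.2 hm1]
  calc ‖x‖ ^ 3 ≤ l x * m x * (1 + √(l x) + √(m x)) := (sub_pos.1 hpos).le
    _ ≤ l x * m x * 3 := by gcongr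
    _ = 3 * (l x * m x) := mul_comm _ _

end CornerBarrierRegularity

section CornerBarrierOperator

variable {n : ℕ} {l m : EuclideanSpace ℝ (Fin n) → ℝ} {x : EuclideanSpace ℝ (Fin n)}

lemma diffusionOp_mul_sqrt {A : Fin n → Fin n → ℝ} {β : Fin n → ℝ} (hl : ContDiffAt ℝ 2 l x)
    (hlx : 0 < l x) :
    diffusionOp A β (fun y => l y * √(l y)) x
      = 3 / 2 * √(l x) * diffusionOp A β l x + 3 / 4 / √(l x) * carreDuChamp A l l x :=
  diffusionOp_comp (φ := fun t => t * √t)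
    ((eventually_gt_nhds hlx).mono fun _ => hasDerivAt_mul_sqrt)
    (hasDerivAt_const_mul_sqrt hlx) hl

lemma carreDuChamp_mul_sqrt_left {A : Fin n → Fin n → ℝ} (hl : ContDiffAt ℝ 2 l x)
    (hlx : 0 < l x) :
    carreDuChamp A (fun y => l y * √(l y)) m x = 3 / 2 * √(l x) * carreDuChamp A l m x :=
  carreDuChamp_comp_left (φ := fun t => t * √t) (hasDerivAt_mul_sqrt hlx)
    (hl.differentiableAt (by simp))

lemma diffusionOp_cornerBarrier {A : Fin n → Fin n → ℝ} {β : Fin n → ℝ}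
    (hA : ∀ i j, A i j = A j i) (hl : ContDiffAt ℝ 2 l x) (hm : ContDiffAt ℝ 2 m x)
    (hlx : 0 < l x) (hmx : 0 < m x) (hx : x ≠ 0) :
    diffusionOp A β (cornerBarrier l m) x
      = 3 / 4 * (m x / √(l x) * carreDuChamp A l l x + l x / √(m x) * carreDuChamp A m m x)
        + (2 + 3 * √(l x) + 3 * √(m x)) * carreDuChamp A l m x
        + (1 + 3 / 2 * √(l x) + √(m x)) * (m x * diffusionOp A β l x)
        + (1 + √(l x) + 3 / 2 * √(m x)) * (l x * diffusionOp A β m x)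
        - (3 / 2 * (‖x‖ * diffusionOp A β (fun y => ‖y‖ ^ 2) x)
          + 3 / 4 * (carreDuChamp A (fun y => ‖y‖ ^ 2) (fun y => ‖y‖ ^ 2) x / ‖x‖)) := by
  have hq : ContDiffAt ℝ 2 (fun y => ‖y‖ ^ 2) x := (contDiff_norm_sq ℝ).contDiffAt
  have hqx : 0 < ‖x‖ ^ 2 := by positivity
  have hl' : ContDiffAt ℝ 2 (fun y => l y * √(l y)) x := contDiffAt_mul_sqrt hl hlx
  have hm' : ContDiffAt ℝ 2 (fun y => m y * √(m y)) x := contDiffAt_mul_sqrt hm hmx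
  have hq' : ContDiffAt ℝ 2 (fun y => ‖y‖ ^ 2 * √(‖y‖ ^ 2)) x :=
    contDiffAt_mul_sqrt hq hqx
  have hΓm : carreDuChamp A l (fun y => m y * √(m y)) x
      = 3 / 2 * √(m x) * carreDuChamp A l m x := by
    rw [carreDuChamp_comm hA, carreDuChamp_mul_sqrt_left hm hmx, carreDuChamp_comm hA]
  have hLq : diffusionOp A β (fun y => ‖y‖ ^ 2 * √(‖y‖ ^ 2)) x
      = 3 / 2 * ‖x‖ * diffusionOp A β (fun y => ‖y‖ ^ 2) x
        + 3 / 4 / ‖x‖ * carreDuChamp A (fun y => ‖y‖ ^ 2) (fun y => ‖y‖ ^ 2) x := by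
    simpa only [Real.sqrt_sq (norm_nonneg x)] using diffusionOp_mul_sqrt hq hqx
  rw [cornerBarrier_eq_mul_sqrt, diffusionOp_sub (((hl.mul hm).add (hl'.mul hm)).add (hl.mul hm'))
    hq', hLq, diffusionOp_add ((hl.mul hm).add (hl'.mul hm)) (hl.mul hm'),
    diffusionOp_add (hl.mul hm) (hl'.mul hm), diffusionOp_mul hA hl hm, diffusionOp_mul hA hl' hm,
    diffusionOp_mul hA hl hm', diffusionOp_mul_sqrt hl hlx, diffusionOp_mul_sqrt hm hmx,
    carreDuChamp_mul_sqrt_left hl hlx, hΓm]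
  ring

end CornerBarrierOperator

lemma mul_le_div_sqrt_add_div_sqrt {s t N R : ℝ} (hs : 0 < s) (ht : 0 < t) (hR : 0 ≤ R)
    (hRN : 3 * N ^ 4 * R ≤ 1) (h : R ^ 3 ≤ 3 * (s * t)) : N * R ≤ t / √s + s / √t := by
  wlog hts : t ≤ s generalizing s t
  · rw [add_comm]
    exact this ht hs (by linarith) (le_of_not_ge hts)
  have hfour : 3 * ((N * R) ^ 2) ^ 2 ≤ 3 * s ^ 2 := by
    calc 3 * ((N * R) ^ 2) ^ 2 = R ^ 3 * (3 * N ^ 4 * R) := by ring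
      _ ≤ R ^ 3 * 1 := by gcongr
      _ ≤ 3 * s ^ 2 := by nlinarith
  have hsq : (N * R) ^ 2 ≤ s := le_of_sq_le_sq (by linarith) hs.le
  calc N * R ≤ √s := Real.le_sqrt_of_sq_le hsq
    _ = s / √s := (Real.div_sqrt).symm
    _ ≤ s / √t := by gcongr
    _ ≤ t / √s + s / √t := le_add_of_nonneg_left (by positivity)

lemma mul_lt_div_sqrt_mul_add_div_sqrt_mul {s t p q C κ R : ℝ} (hκ : 0 < κ) (hs : 0 < s)
    (ht : 0 < t) (hR : 0 < R) (hp : κ ≤ p) (hq : κ ≤ q)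
    (hRC : 3 * (4 * C / (3 * κ) + 1) ^ 4 * R ≤ 1) (h : R ^ 3 ≤ 3 * (s * t)) :
    C * R < 3 / 4 * (t / √s * p + s / √t * q) := by
  have hsing := mul_le_div_sqrt_add_div_sqrt hs ht hR.le hRC h
  calc C * R < (C + 3 / 4 * κ) * R := by gcongr; linarith
    _ = 3 / 4 * ((4 * C / (3 * κ) + 1) * R * κ) := by field_simp
    _ ≤ 3 / 4 * ((t / √s + s / √t) * κ) := by gcongr
    _ ≤ 3 / 4 * (t / √s * p + s / √t * q) := by rw [add_mul]; gcongr

section CornerBarrier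

variable {n : ℕ} {Ω : Set (EuclideanSpace ℝ (Fin n))}
  {a : EuclideanSpace ℝ (Fin n) → Fin n → Fin n → ℝ}
  {b : EuclideanSpace ℝ (Fin n) → Fin n → ℝ} {l m : EuclideanSpace ℝ (Fin n) → ℝ}

lemma fderiv_norm_sq_isBigO {E : Type*} [NormedAddCommGroup E] [InnerProductSpace ℝ E] :
    fderiv ℝ (fun x : E => ‖x‖ ^ 2) =O[𝓝 0] fun x => ‖x‖ :=
  isBigO_norm_of_differentiableAt (differentiableAt_fderiv (contDiff_norm_sq ℝ).contDiffAt)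
    (by simp)

lemma carreDuChamp_norm_sq_div_norm_isBigO {F : Filter (EuclideanSpace ℝ (Fin n))} (hF : F ≤ 𝓝 0)
    (ha : ∀ i j, (fun x => a x i j) =O[F] (fun _ => (1 : ℝ))) :
    (fun x => carreDuChamp (a x) (fun y => ‖y‖ ^ 2) (fun y => ‖y‖ ^ 2) x / ‖x‖)
      =O[F] fun x => ‖x‖ := by
  have hq := (fderiv_norm_sq_isBigO (E := EuclideanSpace ℝ (Fin n))).mono hF
  refine ((carreDuChamp_isBigO ha hq hq).mul (isBigO_refl (fun x => ‖x‖⁻¹) F)).congr_right ?_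
  intro x
  exact mul_self_mul_inv ‖x‖

lemma diffusionOp_cornerBarrier_sub_isBigO (hl : ContDiff ℝ 2 l) (hm : ContDiff ℝ 2 m)
    (hl0 : l 0 = 0) (hm0 : m 0 = 0) (hpos : ∀ x ∈ Ω, 0 < l x ∧ 0 < m x)
    (hasym : ∀ x i j, a x i j = a x j i)
    (ha : ∀ i j, (fun x => a x i j) =O[𝓝[Ω] 0] (fun _ => (1 : ℝ)))
    (hb : ∀ i, (fun x => b x i) =O[𝓝[Ω] 0] (fun _ => (1 : ℝ)))
    (hΓ : (fun x => carreDuChamp (a x) l m x) =O[𝓝[Ω] 0] fun x => ‖x‖) :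
    (fun x => diffusionOp (a x) (b x) (cornerBarrier l m) x
      - 3 / 4 * (m x / √(l x) * carreDuChamp (a x) l l x
        + l x / √(m x) * carreDuChamp (a x) m m x)) =O[𝓝[Ω] 0] fun x => ‖x‖ := by
  have hF : 𝓝[Ω] (0 : EuclideanSpace ℝ (Fin n)) ≤ 𝓝 0 := nhdsWithin_le_nhds
  have hsmall : ∀ {f : EuclideanSpace ℝ (Fin n) → ℝ}, ContDiff ℝ 2 f → f 0 = 0 →
      f =O[𝓝[Ω] 0] fun x => ‖x‖ := fun hf hf0 =>
    (isBigO_norm_of_differentiableAt (hf.contDiffAt.differentiableAt (by simp)) hf0).mono hF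
  have hL : ∀ {f : EuclideanSpace ℝ (Fin n) → ℝ}, ContDiff ℝ 2 f →
      (fun x => diffusionOp (a x) (b x) f x) =O[𝓝[Ω] 0] (fun _ => (1 : ℝ)) := fun hf =>
    diffusionOp_isBigO_one hF ha hb hf.contDiffAt
  have hbdd : ∀ {f : EuclideanSpace ℝ (Fin n) → ℝ}, Continuous f →
      f =O[𝓝[Ω] 0] (fun _ => (1 : ℝ)) := fun hf => (hf.continuousAt.mono_left hF).isBigO_one ℝ
  have hlc := hl.continuous
  have hmc := hm.continuous
  have hΓ' : (fun x => (2 + 3 * √(l x) + 3 * √(m x)) * carreDuChamp (a x) l m x)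
      =O[𝓝[Ω] 0] fun x => ‖x‖ := by
    simpa using (hbdd (by fun_prop : Continuous fun x => 2 + 3 * √(l x) + 3 * √(m x))).mul hΓ
  have hLl : (fun x => (1 + 3 / 2 * √(l x) + √(m x)) * (m x * diffusionOp (a x) (b x) l x))
      =O[𝓝[Ω] 0] fun x => ‖x‖ := by
    simpa using (hbdd (by fun_prop : Continuous fun x => 1 + 3 / 2 * √(l x) + √(m x))).mul
      ((hsmall hm hm0).mul (hL hl))
  have hLm : (fun x => (1 + √(l x) + 3 / 2 * √(m x)) * (l x * diffusionOp (a x) (b x) m x))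
      =O[𝓝[Ω] 0] fun x => ‖x‖ := by
    simpa using (hbdd (by fun_prop : Continuous fun x => 1 + √(l x) + 3 / 2 * √(m x))).mul
      ((hsmall hl hl0).mul (hL hm))
  have hLq : (fun x => ‖x‖ * diffusionOp (a x) (b x) (fun y => ‖y‖ ^ 2) x)
      =O[𝓝[Ω] 0] fun x => ‖x‖ := by
    simpa using (isBigO_refl (fun x => ‖x‖) (𝓝[Ω] 0)).mul (hL (contDiff_norm_sq ℝ))
  refine (((hΓ'.add hLl).add hLm).sub ((hLq.const_mul_left (3 / 2)).add
    ((carreDuChamp_norm_sq_div_norm_isBigO hF ha).const_mul_left (3 / 4)))).congr' ?_ .rfl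
  filter_upwards [self_mem_nhdsWithin] with x hx
  obtain ⟨hlx, hmx⟩ := hpos x hx
  have hx0 : x ≠ 0 := fun h => hlx.ne' (h ▸ hl0)
  rw [diffusionOp_cornerBarrier (hasym x) hl.contDiffAt hm.contDiffAt hlx hmx hx0]
  ring

theorem isBarrier_cornerBarrier {κ M : ℝ} (hκ : 0 < κ) (hl : ContDiff ℝ 2 l)
    (hm : ContDiff ℝ 2 m) (hl0 : l 0 = 0) (hm0 : m 0 = 0) (hpos : ∀ x ∈ Ω, 0 < l x ∧ 0 < m x)
    (hfront : ∀ᶠ x in 𝓝[frontier Ω] 0, l x * m x = 0) (hasym : ∀ x i j, a x i j = a x j i)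
    (ha : ∀ i j, (fun x => a x i j) =O[𝓝[Ω] 0] (fun _ => (1 : ℝ)))
    (hb : ∀ i, (fun x => b x i) =O[𝓝[Ω] 0] (fun _ => (1 : ℝ)))
    (hΓl : ∀ᶠ x in 𝓝[Ω] 0, κ ≤ carreDuChamp (a x) l l x)
    (hΓm : ∀ᶠ x in 𝓝[Ω] 0, κ ≤ carreDuChamp (a x) m m x)
    (hΓ : (fun x => carreDuChamp (a x) l m x) =O[𝓝[Ω] 0] fun x => ‖x‖) :
    IsBarrier Ω a b M (cornerBarrier l m) where
  continuous := by
    have hlc := hl.continuous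
    have hmc := hm.continuous
    unfold cornerBarrier
    fun_prop
  zero := by simp [cornerBarrier, hl0]
  frontier_neg := by
    filter_upwards [hfront] with x hx hx0
    simp only [cornerBarrier, hx, zero_mul, zero_sub, neg_neg_iff_pos]
    positivity
  subsolution := by
    obtain ⟨C, hrem⟩ := ((diffusionOp_cornerBarrier_sub_isBigO hl hm hl0 hm0 hpos hasym ha hb
      hΓ).sub (((cornerBarrier_isBigO hl hm hl0).mono nhdsWithin_le_nhds).const_mul_left
        M)).bound
    have hF : 𝓝[Ω] (0 : EuclideanSpace ℝ (Fin n)) ≤ 𝓝 0 := nhdsWithin_le_nhds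
    have hnear : ∀ {f : EuclideanSpace ℝ (Fin n) → ℝ}, Continuous f → f 0 = 0 →
        ∀ᶠ x in 𝓝[Ω] 0, f x < 1 := fun hf hf0 =>
      hF (hf.continuousAt.eventually_lt_const (by simp [hf0]))
    filter_upwards [self_mem_nhdsWithin, hrem, hΓl, hΓm, hnear hl.continuous hl0,
      hnear hm.continuous hm0,
      hnear (f := fun x => 3 * (4 * C / (3 * κ) + 1) ^ 4 * ‖x‖) (by fun_prop) (by simp)]
      with x hx hrem hΓl hΓm hl1 hm1 hxN hh
    obtain ⟨hlx, hmx⟩ := hpos x hx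
    have hx0 : x ≠ 0 := fun h => hlx.ne' (h ▸ hl0)
    refine ⟨contDiffAt_cornerBarrier hl.contDiffAt hm.contDiffAt hlx hmx hx0, ?_⟩
    have hsing := mul_lt_div_sqrt_mul_add_div_sqrt_mul hκ hlx hmx (norm_pos_iff.2 hx0) hΓl hΓm
      hxN.le (norm_pow_three_le_of_cornerBarrier_pos hlx hmx hl1.le hm1.le hh)
    rw [norm_norm, Real.norm_eq_abs] at hrem
    linarith [(abs_le.1 hrem).1]

end CornerBarrier

/-- The barrier `(l m - μ |x|²) log |x|⁻²` for the case in which the faces `{l = 0}` and `{m = 0}`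
of the corner meet at a conormally acute angle. -/
noncomputable def logBarrier {E : Type*} [NormedAddCommGroup E] (l m : E → ℝ) (μ : ℝ) (x : E) :
    ℝ :=
  (l x * m x - μ * ‖x‖ ^ 2) * -Real.log (‖x‖ ^ 2)

section LogBarrier

variable {n : ℕ} {Ω : Set (EuclideanSpace ℝ (Fin n))}
  {a : EuclideanSpace ℝ (Fin n) → Fin n → Fin n → ℝ}
  {b : EuclideanSpace ℝ (Fin n) → Fin n → ℝ} {l m p : EuclideanSpace ℝ (Fin n) → ℝ} {μ : ℝ}

lemma mul_sub_mul_norm_sq_isBigO {E : Type*} [NormedAddCommGroup E] [NormedSpace ℝ E]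
    {l m : E → ℝ} {μ : ℝ} (hl : DifferentiableAt ℝ l 0) (hm : DifferentiableAt ℝ m 0)
    (hl0 : l 0 = 0) (hm0 : m 0 = 0) :
    (fun x => l x * m x - μ * ‖x‖ ^ 2) =O[𝓝 0] fun x => ‖x‖ ^ 2 := by
  have hlm := (isBigO_norm_of_differentiableAt hl hl0).mul (isBigO_norm_of_differentiableAt hm hm0)
  simp only [← sq] at hlm
  exact hlm.sub ((isBigO_refl _ _).const_mul_left μ)

lemma continuous_logBarrier {E : Type*} [NormedAddCommGroup E] [NormedSpace ℝ E]
    {l m : E → ℝ} {μ : ℝ} (hl : ContDiff ℝ 2 l) (hm : ContDiff ℝ 2 m)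
    (hl0 : l 0 = 0) (hm0 : m 0 = 0) : Continuous (logBarrier l m μ) := by
  have hlc := hl.continuous
  have hmc := hm.continuous
  rw [continuous_iff_continuousAt]
  intro x
  rcases eq_or_ne x 0 with rfl | hx
  · have hp := mul_sub_mul_norm_sq_isBigO (μ := μ) (hl.differentiable (by simp) 0)
      (hm.differentiable (by simp) 0) hl0 hm0
    have hqlog : Tendsto (fun x : E => ‖x‖ ^ 2 * -Real.log (‖x‖ ^ 2)) (𝓝 0) (𝓝 0) := by
      have h : Continuous fun x : E => ‖x‖ ^ 2 * Real.log (‖x‖ ^ 2) :=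
        Real.continuous_mul_log.comp (by fun_prop : Continuous fun x : E => ‖x‖ ^ 2)
      simpa using h.fun_neg.tendsto 0
    have h0 : logBarrier l m μ 0 = 0 := by simp [logBarrier, hl0]
    rw [ContinuousAt, h0]
    exact (hp.mul (isBigO_refl _ _)).trans_tendsto hqlog
  · have hx2 : ‖x‖ ^ 2 ≠ 0 := by positivity
    unfold logBarrier
    fun_prop (disch := assumption)

lemma tendsto_neg_log_norm_sq_atTop {E : Type*} [NormedAddCommGroup E] :
    Tendsto (fun x : E => -Real.log (‖x‖ ^ 2)) (𝓝[≠] 0) atTop := by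
  have hq : Tendsto (fun x : E => ‖x‖ ^ 2) (𝓝[≠] 0) (𝓝[≠] 0) := by
    have hcont : Continuous fun x : E => ‖x‖ ^ 2 := by fun_prop
    refine tendsto_nhdsWithin_iff.2
      ⟨(hcont.tendsto' 0 0 (by simp)).mono_left nhdsWithin_le_nhds, ?_⟩
    filter_upwards [self_mem_nhdsWithin] with x hx
    exact pow_ne_zero 2 (norm_ne_zero_iff.2 hx)
  exact tendsto_neg_atBot_atTop.comp (Real.tendsto_log_nhdsNE_zero.comp hq)

lemma contDiffAt_neg_log_norm_sq {E : Type*} [NormedAddCommGroup E] [InnerProductSpace ℝ E] {x : E}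
    (hx : x ≠ 0) :
    ContDiffAt ℝ 2 (fun y => -Real.log (‖y‖ ^ 2)) x :=
  ((contDiff_norm_sq ℝ).contDiffAt.log (by positivity)).neg

lemma diffusionOp_neg_log_norm_sq {A : Fin n → Fin n → ℝ} {β : Fin n → ℝ}
    {x : EuclideanSpace ℝ (Fin n)} (hx : x ≠ 0) :
    diffusionOp A β (fun y => -Real.log (‖y‖ ^ 2)) x
      = -(‖x‖ ^ 2)⁻¹ * diffusionOp A β (fun y => ‖y‖ ^ 2) x
        + ((‖x‖ ^ 2) ^ 2)⁻¹ * carreDuChamp A (fun y => ‖y‖ ^ 2) (fun y => ‖y‖ ^ 2) x := by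
  have hqx : ‖x‖ ^ 2 ≠ 0 := by positivity
  refine diffusionOp_comp (φ := fun t => -Real.log t) (φ' := fun t => -t⁻¹)
    ((eventually_ne_nhds hqx).mono fun t ht => (Real.hasDerivAt_log ht).neg) ?_
    (contDiff_norm_sq ℝ).contDiffAt
  simpa using (hasDerivAt_inv hqx).fun_neg

lemma carreDuChamp_neg_log_norm_sq {A : Fin n → Fin n → ℝ} {x : EuclideanSpace ℝ (Fin n)}
    (hA : ∀ i j, A i j = A j i) (hx : x ≠ 0) :
    carreDuChamp A p (fun y => -Real.log (‖y‖ ^ 2)) x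
      = -(‖x‖ ^ 2)⁻¹ * carreDuChamp A p (fun y => ‖y‖ ^ 2) x := by
  have hqx : ‖x‖ ^ 2 ≠ 0 := by positivity
  rw [carreDuChamp_comm hA, carreDuChamp_comm hA (f := p)]
  exact carreDuChamp_comp_left (φ := fun t => -Real.log t) (Real.hasDerivAt_log hqx).neg
    ((contDiff_norm_sq ℝ).contDiffAt.differentiableAt (n := 2) (by simp))

lemma diffusionOp_mul_neg_log_sub_isBigO {F : Filter (EuclideanSpace ℝ (Fin n))}
    (hF : F ≤ 𝓝[≠] 0) (hasym : ∀ x i j, a x i j = a x j i)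
    (ha : ∀ i j, (fun x => a x i j) =O[F] (fun _ => (1 : ℝ)))
    (hb : ∀ i, (fun x => b x i) =O[F] (fun _ => (1 : ℝ))) (hp : ContDiff ℝ 2 p)
    (hp0 : p =O[𝓝 0] fun x => ‖x‖ ^ 2) :
    (fun x => diffusionOp (a x) (b x) (fun y => p y * -Real.log (‖y‖ ^ 2)) x
      - -Real.log (‖x‖ ^ 2) * diffusionOp (a x) (b x) p x) =O[F] (fun _ => (1 : ℝ)) := by
  have hF' : F ≤ 𝓝 0 := hF.trans nhdsWithin_le_nhds
  have hdp : fderiv ℝ p =O[F] fun x => ‖x‖ := by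
    have hp2 : p =O[𝓝 0] fun x => ‖x - 0‖ ^ 2 := by simpa using hp0
    have hp' : HasFDerivAt p (0 : EuclideanSpace ℝ (Fin n) →L[ℝ] ℝ) 0 :=
      hp2.hasFDerivAt one_lt_two
    exact (isBigO_norm_of_differentiableAt (differentiableAt_fderiv hp.contDiffAt)
      hp'.fderiv).mono hF'
  have hdq := (fderiv_norm_sq_isBigO (E := EuclideanSpace ℝ (Fin n))).mono hF'
  have hLq := diffusionOp_isBigO_one hF' ha hb (f := fun y => ‖y‖ ^ 2)
    (contDiff_norm_sq ℝ).contDiffAt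
  have hscale : ∀ {f : EuclideanSpace ℝ (Fin n) → ℝ}, f =O[F] (fun x => ‖x‖ ^ 2) →
      (fun x => (‖x‖ ^ 2)⁻¹ * f x) =O[F] (fun _ => (1 : ℝ)) := fun hf => by
    refine ((isBigO_refl (fun x => (‖x‖ ^ 2)⁻¹) F).mul hf).trans (isBigO_of_le F fun x => ?_)
    rw [norm_one, Real.norm_of_nonneg (by positivity)]
    exact inv_mul_le_one
  have hpq := hscale (hp0.mono hF')
  have hΓpq := hscale ((carreDuChamp_isBigO ha hdp hdq).congr_right fun x => (sq ‖x‖).symm)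
  have hΓqq := hscale ((carreDuChamp_isBigO ha hdq hdq).congr_right fun x => (sq ‖x‖).symm)
  have hsum := ((hpq.mul hΓqq).sub (hpq.mul hLq)).sub
    (((isBigO_refl (fun _ => (1 : ℝ)) F).mul hΓpq).const_mul_left 2)
  simp only [mul_one, one_mul] at hsum
  refine hsum.congr' ?_ .rfl
  filter_upwards [hF self_mem_nhdsWithin] with x hx
  rw [diffusionOp_mul (hasym x) hp.contDiffAt (contDiffAt_neg_log_norm_sq hx),
    diffusionOp_neg_log_norm_sq hx, carreDuChamp_neg_log_norm_sq (hasym x) hx]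
  ring

lemma diffusionOp_mul_sub_mul_norm_sq {A : Fin n → Fin n → ℝ} {β : Fin n → ℝ}
    {x : EuclideanSpace ℝ (Fin n)} (hA : ∀ i j, A i j = A j i) (hl : ContDiffAt ℝ 2 l x)
    (hm : ContDiffAt ℝ 2 m x) :
    diffusionOp A β (fun y => l y * m y - μ * ‖y‖ ^ 2) x
      = l x * diffusionOp A β m x + m x * diffusionOp A β l x + 2 * carreDuChamp A l m x
        - μ * diffusionOp A β (fun y => ‖y‖ ^ 2) x := by
  have hμq : ContDiffAt ℝ 2 (fun y => μ * ‖y‖ ^ 2) x :=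
    contDiffAt_const.mul (contDiff_norm_sq ℝ).contDiffAt
  rw [diffusionOp_sub (hl.mul hm) hμq, diffusionOp_mul hA hl hm, diffusionOp_const_mul]

lemma eventually_le_diffusionOp_mul_sub_mul_norm_sq {κ : ℝ} (hκ : 0 < κ)
    {F : Filter (EuclideanSpace ℝ (Fin n))} (hF : F ≤ 𝓝 0)
    (hasym : ∀ x i j, a x i j = a x j i)
    (ha : ∀ i j, (fun x => a x i j) =O[F] (fun _ => (1 : ℝ)))
    (hb : ∀ i, (fun x => b x i) =O[F] (fun _ => (1 : ℝ)))
    (hl : ContDiff ℝ 2 l) (hm : ContDiff ℝ 2 m) (hl0 : l 0 = 0) (hm0 : m 0 = 0)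
    (hΓ : ∀ᶠ x in F, κ ≤ carreDuChamp (a x) l m x) :
    ∀ᶠ μ in 𝓝[>] (0 : ℝ), ∀ᶠ x in F,
      κ ≤ diffusionOp (a x) (b x) (fun y => l y * m y - μ * ‖y‖ ^ 2) x := by
  have hL : ∀ {f : EuclideanSpace ℝ (Fin n) → ℝ}, ContDiff ℝ 2 f →
      (fun x => diffusionOp (a x) (b x) f x) =O[F] (fun _ => (1 : ℝ)) := fun hf =>
    diffusionOp_isBigO_one hF ha hb hf.contDiffAt
  have hvanish : ∀ {f g : EuclideanSpace ℝ (Fin n) → ℝ}, ContDiff ℝ 2 f → f 0 = 0 →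
      ContDiff ℝ 2 g → Tendsto (fun x => f x * diffusionOp (a x) (b x) g x) F (𝓝 0) :=
    fun {f g} hf hf0 hg => by
      have h : Tendsto f F (𝓝 0) := hf0 ▸ (hf.continuous.tendsto 0).mono_left hF
      exact ((isBigO_refl _ _).mul (hL hg)).trans_tendsto (by simpa using h)
  obtain ⟨C, hC⟩ := (hL (contDiff_norm_sq ℝ)).bound
  have hsmall : ∀ᶠ μ in 𝓝 (0 : ℝ), μ * C < κ / 2 :=
    (continuous_id.mul continuous_const).continuousAt.eventually_lt_const
      (by simpa using half_pos hκ)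
  filter_upwards [hsmall.filter_mono nhdsWithin_le_nhds, self_mem_nhdsWithin] with μ hμC hμ
  filter_upwards [hΓ, hC, ((hvanish hl hl0 hm).add (hvanish hm hm0 hl)).eventually_const_lt
    (by linarith : -(κ / 2) < 0 + 0)] with x hΓx hCx hx
  rw [diffusionOp_mul_sub_mul_norm_sq (hasym x) hl.contDiffAt hm.contDiffAt]
  rw [norm_one, mul_one, Real.norm_eq_abs] at hCx
  have hμq : μ * diffusionOp (a x) (b x) (fun y => ‖y‖ ^ 2) x ≤ μ * C :=
    mul_le_mul_of_nonneg_left (le_of_abs_le hCx) (le_of_lt hμ)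
  linarith

theorem eventually_isBarrier_logBarrier {κ M : ℝ} (hκ : 0 < κ) (hl : ContDiff ℝ 2 l)
    (hm : ContDiff ℝ 2 m) (hl0 : l 0 = 0) (hm0 : m 0 = 0) (hlΩ : ∀ x ∈ Ω, 0 < l x)
    (hfront : ∀ᶠ x in 𝓝[frontier Ω] 0, l x * m x = 0) (hasym : ∀ x i j, a x i j = a x j i)
    (ha : ∀ i j, (fun x => a x i j) =O[𝓝[Ω] 0] (fun _ => (1 : ℝ)))
    (hb : ∀ i, (fun x => b x i) =O[𝓝[Ω] 0] (fun _ => (1 : ℝ)))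
    (hΓ : ∀ᶠ x in 𝓝[Ω] 0, κ ≤ carreDuChamp (a x) l m x) :
    ∀ᶠ μ in 𝓝[>] 0, IsBarrier Ω a b M (logBarrier l m μ) := by
  filter_upwards [self_mem_nhdsWithin, eventually_le_diffusionOp_mul_sub_mul_norm_sq hκ
    nhdsWithin_le_nhds hasym ha hb hl hm hl0 hm0 hΓ] with μ hμ hLp
  have hp0 := mul_sub_mul_norm_sq_isBigO (μ := μ) (hl.differentiable (by simp) 0)
    (hm.differentiable (by simp) 0) hl0 hm0
  have hp : ContDiff ℝ 2 fun x => l x * m x - μ * ‖x‖ ^ 2 :=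
    (hl.mul hm).sub (contDiff_const.mul (contDiff_norm_sq ℝ))
  have hΩ0 : ∀ x ∈ Ω, x ≠ 0 := fun x hx h => (hlΩ x hx).ne' (h ▸ hl0)
  have hF : 𝓝[Ω] (0 : EuclideanSpace ℝ (Fin n)) ≤ 𝓝[≠] 0 := nhdsWithin_mono 0 hΩ0
  refine ⟨continuous_logBarrier hl hm hl0 hm0, by simp [logBarrier, hl0], ?_, ?_⟩
  · filter_upwards [hfront, nhdsWithin_le_nhds (Metric.ball_mem_nhds 0 one_pos)] with x hx hx1 hx0
    rw [mem_ball_zero_iff] at hx1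
    have hlog : Real.log (‖x‖ ^ 2) < 0 :=
      Real.log_neg (by positivity) (pow_lt_one₀ (norm_nonneg x) hx1 two_ne_zero)
    have hμx : 0 < μ * ‖x‖ ^ 2 := mul_pos hμ (by positivity)
    rw [logBarrier, hx]
    nlinarith
  · obtain ⟨C, hC⟩ := (diffusionOp_mul_neg_log_sub_isBigO hF hasym ha hb hp hp0).bound
    have hMp : ∀ᶠ x in 𝓝[Ω] 0, M * (l x * m x - μ * ‖x‖ ^ 2) < κ / 2 :=
      nhdsWithin_le_nhds ((continuous_const.mul hp.continuous).continuousAt.eventually_lt_const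
        (by simpa [hl0] using half_pos hκ))
    have hlog : Tendsto (fun x : EuclideanSpace ℝ (Fin n) => -Real.log (‖x‖ ^ 2)) (𝓝[Ω] 0) atTop :=
      (tendsto_neg_log_norm_sq_atTop.mono_left hF)
    filter_upwards [self_mem_nhdsWithin, hLp, hC, hMp, hlog.eventually_gt_atTop (2 * C / κ),
      hlog.eventually_gt_atTop 0] with x hx hLp hC hMp hw hw0 _
    refine ⟨hp.contDiffAt.mul (contDiffAt_neg_log_norm_sq (hΩ0 x hx)), ?_⟩
    rw [norm_one, mul_one, Real.norm_eq_abs] at hC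
    rw [div_lt_iff₀ hκ] at hw
    have hgain : κ / 2 * -Real.log (‖x‖ ^ 2) ≤ (diffusionOp (a x) (b x)
        (fun y => l y * m y - μ * ‖y‖ ^ 2) x - M * (l x * m x - μ * ‖x‖ ^ 2))
          * -Real.log (‖x‖ ^ 2) := by
      gcongr
      linarith
    unfold logBarrier
    linarith [(abs_le.1 hC).1]

end LogBarrier

section RayGrowth

variable {E : Type*} [NormedAddCommGroup E] [NormedSpace ℝ E] {l m : E → ℝ} {μ : ℝ} {s : E}

lemma tendsto_smul_nhdsGT_zero (s : E) : Tendsto (fun t : ℝ => t • s) (𝓝[>] 0) (𝓝 0) := by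
  have hcont : Continuous fun t : ℝ => t • s := by fun_prop
  exact (hcont.tendsto' 0 0 (zero_smul ℝ s)).mono_left nhdsWithin_le_nhds

lemma tendsto_inv_mul_apply_smul (hl : DifferentiableAt ℝ l 0) (hl0 : l 0 = 0) (s : E) :
    Tendsto (fun t : ℝ => t⁻¹ * l (t • s)) (𝓝[>] 0) (𝓝 (fderiv ℝ l 0 s)) := by
  simpa [hl0] using (hl.hasFDerivAt.hasLineDerivAt s).tendsto_slope_zero_right

lemma tendsto_cornerBarrier_smul_div_sq (hl : DifferentiableAt ℝ l 0) (hm : DifferentiableAt ℝ m 0)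
    (hl0 : l 0 = 0) (hm0 : m 0 = 0) :
    Tendsto (fun t : ℝ => cornerBarrier l m (t • s) / t ^ 2) (𝓝[>] 0)
      (𝓝 (fderiv ℝ l 0 s * fderiv ℝ m 0 s)) := by
  have hsqrt : ∀ {f : E → ℝ}, DifferentiableAt ℝ f 0 → f 0 = 0 →
      Tendsto (fun t : ℝ => √(f (t • s))) (𝓝[>] 0) (𝓝 0) := fun {f} hf hf0 => by
    have hlim := hf.continuousAt.sqrt.tendsto
    rw [hf0, Real.sqrt_zero] at hlim
    exact hlim.comp (tendsto_smul_nhdsGT_zero s)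
  have hcube : Tendsto (fun t : ℝ => t * ‖s‖ ^ 3) (𝓝[>] 0) (𝓝 0) := by
    simpa using tendsto_smul_nhdsGT_zero (‖s‖ ^ 3)
  have hlim := (((tendsto_inv_mul_apply_smul hl hl0 s).mul
    (tendsto_inv_mul_apply_smul hm hm0 s)).mul
      (((hsqrt hl hl0).const_add 1).add (hsqrt hm hm0))).sub hcube
  simp only [add_zero, mul_one, sub_zero] at hlim
  refine hlim.congr' ?_
  filter_upwards [self_mem_nhdsWithin] with t (ht : 0 < t)
  rw [cornerBarrier, norm_smul, Real.norm_of_nonneg ht.le]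
  field_simp

lemma tendsto_logBarrier_smul_div_sq (hl : DifferentiableAt ℝ l 0) (hm : DifferentiableAt ℝ m 0)
    (hl0 : l 0 = 0) (hm0 : m 0 = 0) (hs : s ≠ 0)
    (hμ : μ * ‖s‖ ^ 2 < fderiv ℝ l 0 s * fderiv ℝ m 0 s) :
    Tendsto (fun t : ℝ => logBarrier l m μ (t • s) / t ^ 2) (𝓝[>] 0) atTop := by
  have hray : Tendsto (fun t : ℝ => t • s) (𝓝[>] 0) (𝓝[≠] 0) := by
    refine tendsto_nhdsWithin_iff.2 ⟨tendsto_smul_nhdsGT_zero s, ?_⟩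
    filter_upwards [self_mem_nhdsWithin] with t (ht : 0 < t) using smul_ne_zero ht.ne' hs
  refine Tendsto.congr' ?_ (((((tendsto_inv_mul_apply_smul hl hl0 s).mul
    (tendsto_inv_mul_apply_smul hm hm0 s)).sub_const (μ * ‖s‖ ^ 2))).pos_mul_atTop (sub_pos.2 hμ)
      (tendsto_neg_log_norm_sq_atTop.comp hray))
  filter_upwards [self_mem_nhdsWithin] with t (ht : 0 < t)
  rw [logBarrier, norm_smul, Real.norm_of_nonneg ht.le, Function.comp_apply, norm_smul,
    Real.norm_of_nonneg ht.le]
  field_simp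

end RayGrowth

section InteriorCone

variable {E : Type*} [NormedAddCommGroup E] [NormedSpace ℝ E] {Ω : Set E} {l m : E → ℝ} {s : E}

/-- `Ω` has an interior cone around the direction `s` at the boundary point `0`, uniformly in the
vertex: for `p ∈ Ω` near `0`, `v` near `s` and small `t ≥ 0` the point `p + t v` is in `Ω`. -/
def HasUniformInteriorCone (Ω : Set E) (s : E) : Prop :=
  ∀ᶠ q : (E × E) × ℝ in (𝓝[Ω] 0 ×ˢ 𝓝 s) ×ˢ 𝓝[≥] 0, q.1.1 + q.2 • q.1.2 ∈ Ω

lemma tendsto_add_smul_nhds_zero (s : E) :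
    Tendsto (fun q : (E × E) × ℝ => q.1.1 + q.2 • q.1.2) ((𝓝 0 ×ˢ 𝓝 s) ×ˢ 𝓝[≥] 0) (𝓝 0) := by
  have hcont : Continuous fun q : (E × E) × ℝ => q.1.1 + q.2 • q.1.2 := by fun_prop
  refine (hcont.tendsto' ((0, s), 0) 0 (by simp)).mono_left ?_
  rw [nhds_prod_eq, nhds_prod_eq]
  exact prod_mono_right _ nhdsWithin_le_nhds

lemma eventually_le_apply_add_smul {f' : E →L[ℝ] ℝ} (hl : HasStrictFDerivAt l f' 0)
    (hs : 0 < f' s) :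
    ∀ᶠ q : (E × E) × ℝ in (𝓝 0 ×ˢ 𝓝 s) ×ˢ 𝓝[≥] 0, l q.1.1 ≤ l (q.1.1 + q.2 • q.1.2) := by
  obtain ⟨c, hc, hcs⟩ : ∃ c > 0, c * ‖s‖ < f' s :=
    ⟨f' s / (‖s‖ + 1), by positivity, by
      rw [div_mul_eq_mul_div, div_lt_iff₀ (by positivity)]; nlinarith⟩
  have hpair : Tendsto (fun q : (E × E) × ℝ => (q.1.1 + q.2 • q.1.2, q.1.1))
      ((𝓝 0 ×ˢ 𝓝 s) ×ˢ 𝓝[≥] 0) (𝓝 (0, 0)) :=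
    (tendsto_add_smul_nhds_zero s).prodMk_nhds (tendsto_fst.comp tendsto_fst)
  have hdir : ∀ᶠ v in 𝓝 s, c * ‖v‖ < f' v :=
    (by fun_prop : Continuous fun v => c * ‖v‖).continuousAt.eventually_lt
      f'.continuous.continuousAt hcs
  have hdir' := (tendsto_snd.comp tendsto_fst :
    Tendsto (fun q : (E × E) × ℝ => q.1.2) ((𝓝 0 ×ˢ 𝓝 s) ×ˢ 𝓝[≥] 0) (𝓝 s)).eventually hdir
  filter_upwards [hpair.eventually (hl.isLittleO.bound hc), hdir',
    tendsto_snd.eventually self_mem_nhdsWithin] with ⟨⟨p, v⟩, t⟩ hrem hv (ht : 0 ≤ t)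
  simp only [add_sub_cancel_left, map_smul, smul_eq_mul, norm_smul, Real.norm_eq_abs,
    abs_of_nonneg ht] at hrem hv ⊢
  have hrem' := mul_le_mul_of_nonneg_left (show c * ‖v‖ < f' v from hv).le ht
  nlinarith [(abs_le.1 hrem).1]

lemma eventually_forall_Icc_of_eventually_nhdsGE {p : ℝ → Prop} (hp : ∀ᶠ t in 𝓝[≥] 0, p t) :
    ∀ᶠ t in 𝓝[≥] (0 : ℝ), ∀ τ ∈ Icc 0 t, p τ := by
  obtain ⟨r, hr, hrp⟩ := mem_nhdsGE_iff_exists_Icc_subset.1 hp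
  filter_upwards [Icc_mem_nhdsGE hr] with t ht τ hτ using hrp ⟨hτ.1, hτ.2.trans ht.2⟩

lemma hasUniformInteriorCone_of_forall_notMem_frontier (hΩ : IsOpen Ω)
    (hfr : ∀ᶠ q : (E × E) × ℝ in (𝓝[Ω] 0 ×ˢ 𝓝 s) ×ˢ 𝓝[≥] 0, q.1.1 + q.2 • q.1.2 ∉ frontier Ω) :
    HasUniformInteriorCone Ω s := by
  obtain ⟨P, hP, Q, hQ, hPQ⟩ := eventually_prod_iff.1 hfr
  have hΩP := hP.and (tendsto_fst.eventually (self_mem_nhdsWithin (a := (0 : E)) (s := Ω)))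
  refine (hΩP.prod_mk ((eventually_forall_Icc_of_eventually_nhdsGE hQ).and
    self_mem_nhdsWithin)).mono ?_
  rintro ⟨⟨p, v⟩, t⟩ ⟨⟨hpv, hp⟩, ht, ht0⟩
  have hseg : IsPreconnected ((fun τ : ℝ => p + τ • v) '' Icc 0 t) :=
    isPreconnected_Icc.image _ (by fun_prop)
  refine hseg.subset_of_closure_inter_subset hΩ ⟨p, ⟨0, left_mem_Icc.2 ht0, by simp⟩, hp⟩ ?_
    ⟨t, right_mem_Icc.2 ht0, rfl⟩
  rintro _ ⟨hcl, τ, hτ, rfl⟩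
  by_contra hn
  exact hPQ hpv (ht τ hτ) ⟨hcl, by rwa [hΩ.interior_eq]⟩

theorem hasUniformInteriorCone_of_fderiv_pos (hΩ : IsOpen Ω) (hl : ContDiff ℝ 1 l)
    (hm : ContDiff ℝ 1 m) (hpos : ∀ x ∈ Ω, 0 < l x ∧ 0 < m x)
    (hfront : ∀ᶠ x in 𝓝[frontier Ω] 0, l x * m x = 0)
    (hls : 0 < fderiv ℝ l 0 s) (hms : 0 < fderiv ℝ m 0 s) : HasUniformInteriorCone Ω s := by
  have hF : (𝓝[Ω] (0 : E) ×ˢ 𝓝 s) ×ˢ 𝓝[≥] (0 : ℝ) ≤ (𝓝 0 ×ˢ 𝓝 s) ×ˢ 𝓝[≥] 0 :=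
    prod_mono_left _ (prod_mono_left _ nhdsWithin_le_nhds)
  refine hasUniformInteriorCone_of_forall_notMem_frontier hΩ ?_
  filter_upwards [hF (eventually_le_apply_add_smul (hl.hasStrictFDerivAt one_ne_zero) hls),
    hF (eventually_le_apply_add_smul (hm.hasStrictFDerivAt one_ne_zero) hms),
    ((tendsto_add_smul_nhds_zero s).mono_left hF).eventually (eventually_nhdsWithin_iff.1 hfront),
    tendsto_fst.eventually (tendsto_fst.eventually self_mem_nhdsWithin)] with q hlq hmq hq hqΩ hmem
  obtain ⟨hlp, hmp⟩ := hpos _ hqΩ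
  exact (mul_pos (hlp.trans_le hlq) (hmp.trans_le hmq)).ne' (hq hmem)

lemma HasUniformInteriorCone.eventually_smul_mem (hcone : HasUniformInteriorCone Ω s)
    (h0 : (0 : E) ∈ closure Ω) : ∀ᶠ t : ℝ in 𝓝[>] 0, t • s ∈ Ω := by
  have := mem_closure_iff_nhdsWithin_neBot.1 h0
  obtain ⟨P, hP, T, hT, hPT⟩ := eventually_prod_iff.1 hcone
  filter_upwards [nhdsWithin_mono _ Ioi_subset_Ici_self hT, self_mem_nhdsWithin] with t hTt
    (ht : 0 < t)
  have hdir : Tendsto (fun p : E => (p, s - t⁻¹ • p)) (𝓝[Ω] 0) (𝓝[Ω] 0 ×ˢ 𝓝 s) := by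
    have hcont : Continuous fun p : E => s - t⁻¹ • p := by fun_prop
    exact tendsto_id.prodMk ((hcont.tendsto' 0 s (by simp)).mono_left nhdsWithin_le_nhds)
  obtain ⟨p, hp⟩ := (hdir.eventually hP).exists
  have hmem := hPT hp hTt
  rwa [smul_sub, smul_inv_smul₀ ht.ne', add_sub_cancel] at hmem

lemma hasUniformInteriorCone_closure (hcone : HasUniformInteriorCone Ω s) :
    HasUniformInteriorCone (closure Ω) s := by
  obtain ⟨PV, hPV, T, hT, hPVT⟩ := eventually_prod_iff.1 hcone
  obtain ⟨P, hP, V, hV, hPV'⟩ := eventually_prod_iff.1 hPV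
  obtain ⟨U, hU, hUo, h0U⟩ := eventually_nhds_iff.1 (eventually_nhdsWithin_iff.1 hP)
  have hclosure : ∀ᶠ x in 𝓝[closure Ω] (0 : E), x ∈ closure (U ∩ Ω) := by
    filter_upwards [self_mem_nhdsWithin, nhdsWithin_le_nhds (hUo.mem_nhds h0U)] with x hx hxU
    exact hUo.inter_closure ⟨hxU, hx⟩
  refine ((hclosure.prod_mk hV).prod_mk hT).mono ?_
  rintro ⟨⟨x, v⟩, t⟩ ⟨⟨hx, hv⟩, ht⟩
  exact map_mem_closure (f := fun y => y + t • v) (by fun_prop) hx fun y hy =>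
    hPVT (hPV' (hU y hy.1 hy.2) hv) ht

lemma HasUniformInteriorCone.eventually_uniqueDiffWithinAt (hcone : HasUniformInteriorCone Ω s) :
    ∀ᶠ x in 𝓝[Ω] 0, UniqueDiffWithinAt ℝ Ω x := by
  obtain ⟨PV, hPV, T, hT, hPVT⟩ := eventually_prod_iff.1 hcone
  obtain ⟨P, hP, V, hV, hPV'⟩ := eventually_prod_iff.1 hPV
  filter_upwards [hP, self_mem_nhdsWithin] with x hx hxΩ
  refine ⟨?_, subset_closure hxΩ⟩
  have hVsub : {v | V v} ⊆ Submodule.span ℝ (tangentConeAt ℝ Ω x) := fun v hv => by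
    refine Submodule.subset_span (mem_tangentConeAt_of_add_smul_mem (l := 𝓝[>] (0 : ℝ))
      (tendsto_id.mono_left (nhdsWithin_mono _ fun t (ht : 0 < t) => ht.ne')) ?_)
    filter_upwards [nhdsWithin_mono _ Ioi_subset_Ici_self hT] with t ht using hPVT (hPV' hx hv) ht
  have htop := Submodule.eq_top_of_nonempty_interior' (Submodule.span ℝ (tangentConeAt ℝ Ω x))
    ⟨s, mem_interior_iff_mem_nhds.2 (mem_of_superset hV hVsub)⟩
  simp [htop]

end InteriorCone

section RayExpansion

lemma tendsto_sub_sub_mul_div_sq {f g : ℝ → ℝ} {d : ℝ}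
    (hf : ∀ᶠ r in 𝓝[>] 0, ∀ t ∈ Icc 0 r, HasDerivWithinAt f (g t) (Icc 0 r) t)
    (hg : HasDerivWithinAt g d (Ici 0) 0) :
    Tendsto (fun t => (f t - f 0 - t * g 0) / t ^ 2) (𝓝[>] 0) (𝓝 (d / 2)) := by
  obtain ⟨r, hf, hr : 0 < r⟩ := (hf.and self_mem_nhdsWithin).exists
  have hderiv : ∀ t ∈ Icc 0 r,
      HasDerivWithinAt (fun t => f t - t * g 0 - t ^ 2 * (d / 2)) (g t - g 0 - t * d) (Icc 0 r) t :=
    fun t ht => (((hf t ht).fun_sub ((hasDerivAt_id t).mul_const (g 0)).hasDerivWithinAt).fun_sub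
      ((hasDerivAt_pow 2 t).mul_const (d / 2)).hasDerivWithinAt).congr_deriv (by simp; ring)
  have hg' : (fun t => g t - g 0 - t * d) =o[𝓝[Icc 0 r] 0] fun t => (t - 0) ^ 1 := by
    simpa using (hg.mono Icc_subset_Ici_self).hasFDerivWithinAt.isLittleO
  have hexp := (convex_Icc 0 r).isLittleO_pow_succ_real (left_mem_Icc.2 hr.le) hderiv hg'
  have hlim := ((hexp.mono (nhdsWithin_le_of_mem
    (Icc_mem_nhdsGT hr))).tendsto_div_nhds_zero).add_const (d / 2)
  rw [zero_add] at hlim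
  refine hlim.congr' ?_
  filter_upwards [self_mem_nhdsWithin] with t (ht : 0 < t)
  simp only [sub_zero, zero_mul, ne_eq, OfNat.ofNat_ne_zero, not_false_eq_true, zero_pow,
    Nat.reduceAdd]
  field_simp
  ring

variable {E : Type*} [NormedAddCommGroup E] [NormedSpace ℝ E] {K : Set E} {u : E → ℝ} {s x₀ : E}

lemma differentiableWithinAt_fderivWithin (hu : ContDiffWithinAt ℝ 2 u K x₀)
    (hK : ∀ᶠ x in 𝓝[K] x₀, UniqueDiffWithinAt ℝ K x) (hx₀ : x₀ ∈ K) :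
    DifferentiableWithinAt ℝ (fderivWithin ℝ u K) K x₀ := by
  have hu' : ContDiffWithinAt ℝ 2 (Function.uncurry fun _ : E => u) (insert x₀ K ×ˢ K) (x₀, x₀) :=
    hu.comp (x₀, x₀) contDiffWithinAt_snd (prod_subset_preimage_snd _ _)
  have hK' : ∀ᶠ x in 𝓝[insert x₀ K] x₀, UniqueDiffWithinAt ℝ K x := by
    rwa [insert_eq_of_mem hx₀]
  exact (hu'.fderivWithin' contDiffWithinAt_id hK' (m := 1) (by norm_num)
    subset_rfl).differentiableWithinAt one_ne_zero

theorem tendsto_apply_smul_sub_sub_mul_div_sq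
    (hu : ∀ᶠ x in 𝓝[K] 0, DifferentiableWithinAt ℝ u K x)
    (hu' : DifferentiableWithinAt ℝ (fderivWithin ℝ u K) K 0)
    (hs : ∀ᶠ t : ℝ in 𝓝[≥] 0, t • s ∈ K) :
    Tendsto (fun t : ℝ => (u (t • s) - u 0 - t * fderivWithin ℝ u K 0 s) / t ^ 2) (𝓝[>] 0)
      (𝓝 (fderivWithin ℝ (fun x => fderivWithin ℝ u K x s) K 0 s / 2)) := by
  have hline : ∀ t : ℝ, HasDerivAt (fun t : ℝ => t • s) s t := fun t => by
    simpa using (hasDerivAt_id t).smul_const s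
  have hray : Tendsto (fun t : ℝ => t • s) (𝓝[≥] 0) (𝓝[K] 0) :=
    tendsto_nhdsWithin_iff.2 ⟨((by fun_prop : Continuous fun t : ℝ => t • s).tendsto' 0 0
      (zero_smul ℝ s)).mono_left nhdsWithin_le_nhds, hs⟩
  have hderiv : ∀ᶠ r in 𝓝[>] 0, ∀ t ∈ Icc 0 r, HasDerivWithinAt (fun t : ℝ => u (t • s))
      (fderivWithin ℝ u K (t • s) s) (Icc 0 r) t := by
    filter_upwards [nhdsWithin_mono _ Ioi_subset_Ici_self
      (eventually_forall_Icc_of_eventually_nhdsGE (hs.and (hray.eventually hu)))] with r hr t ht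
    exact (hr t ht).2.hasFDerivWithinAt.comp_hasDerivWithinAt t (hline t).hasDerivWithinAt
      fun τ hτ => (hr τ hτ).1
  have hderiv2 : HasDerivWithinAt (fun t : ℝ => fderivWithin ℝ u K (t • s) s)
      (fderivWithin ℝ (fun x => fderivWithin ℝ u K x s) K 0 s) (Ici 0) 0 := by
    obtain ⟨r, hr, hmaps⟩ := mem_nhdsGE_iff_exists_Icc_subset.1 hs
    have h := hu'.clm_apply (differentiableWithinAt_const s) |>.hasFDerivWithinAt
    exact (h.comp_hasDerivWithinAt_of_eq 0 (hline 0).hasDerivWithinAt hmaps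
      (zero_smul ℝ s).symm).mono_of_mem_nhdsWithin (Icc_mem_nhdsGE hr)
  simpa using tendsto_sub_sub_mul_div_sq hderiv hderiv2

end RayExpansion

section CoefficientsNearCorner

variable {n : ℕ} {F : Filter (EuclideanSpace ℝ (Fin n))} {x₀ : EuclideanSpace ℝ (Fin n)}
  {a : EuclideanSpace ℝ (Fin n) → Fin n → Fin n → ℝ} {f g : EuclideanSpace ℝ (Fin n) → ℝ}

lemma carreDuChamp_neg_neg {A : Fin n → Fin n → ℝ} {x : EuclideanSpace ℝ (Fin n)} :
    carreDuChamp A (fun y => -f y) (fun y => -g y) x = carreDuChamp A f g x := by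
  simp [carreDuChamp, pd, fderiv_fun_neg]

lemma tendsto_carreDuChamp {A : Fin n → Fin n → ℝ} (hF : F ≤ 𝓝 x₀)
    (ha : ∀ i j, Tendsto (fun x => a x i j) F (𝓝 (A i j))) (hf : ContDiffAt ℝ 1 f x₀)
    (hg : ContDiffAt ℝ 1 g x₀) :
    Tendsto (fun x => carreDuChamp (a x) f g x) F (𝓝 (carreDuChamp A f g x₀)) :=
  tendsto_finsetSum _ fun i _ => tendsto_finsetSum _ fun j _ =>
    ((ha i j).mul ((continuousAt_pd hf).mono_left hF)).mul ((continuousAt_pd hg).mono_left hF)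

lemma differentiableWithinAt_carreDuChamp {S : Set (EuclideanSpace ℝ (Fin n))}
    (ha : ∀ i j, DifferentiableWithinAt ℝ (fun x => a x i j) S x₀) (hf : ContDiffAt ℝ 2 f x₀)
    (hg : ContDiffAt ℝ 2 g x₀) :
    DifferentiableWithinAt ℝ (fun x => carreDuChamp (a x) f g x) S x₀ :=
  .fun_sum fun i _ => .fun_sum fun j _ =>
    ((ha i j).mul (differentiableAt_pd hf).differentiableWithinAt).mul
      (differentiableAt_pd hg).differentiableWithinAt

lemma carreDuChamp_isBigO_norm {S : Set (EuclideanSpace ℝ (Fin n))}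
    (ha : ∀ i j, DifferentiableWithinAt ℝ (fun x => a x i j) S 0) (hf : ContDiffAt ℝ 2 f 0)
    (hg : ContDiffAt ℝ 2 g 0) (h0 : carreDuChamp (a 0) f g 0 = 0) :
    (fun x => carreDuChamp (a x) f g x) =O[𝓝[S] 0] fun x => ‖x‖ := by
  simpa [h0] using (differentiableWithinAt_carreDuChamp ha hf hg).isBigO_sub.norm_right

lemma exists_eventually_le_carreDuChamp_self {lam : ℝ} (hlam : 0 < lam) (hF : F ≤ 𝓝 x₀)
    (hell : ∀ᶠ x in F, ∀ ξ : EuclideanSpace ℝ (Fin n),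
      lam * ‖ξ‖ ^ 2 ≤ ∑ i, ∑ j, a x i j * ξ i * ξ j)
    (hf : ContDiffAt ℝ 1 f x₀) (hf' : fderiv ℝ f x₀ ≠ 0) :
    ∃ κ > 0, ∀ᶠ x in F, κ ≤ carreDuChamp (a x) f f x := by
  have hpos : 0 < lam * ‖fderiv ℝ f x₀‖ ^ 2 := by positivity
  have hcont : ContinuousAt (fun x => lam * ‖fderiv ℝ f x‖ ^ 2) x₀ :=
    ((hf.continuousAt_fderiv (by simp)).norm.pow 2).const_mul lam
  refine ⟨_, half_pos hpos, ?_⟩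
  filter_upwards [hell, hF (hcont.eventually_const_le (half_lt_self hpos))] with x hx hfx
  exact hfx.trans (le_carreDuChamp_self hx)

end CoefficientsNearCorner

section RayDerivatives

lemma HasUniformInteriorCone.tendsto_apply_smul_sub_sub_mul_div_sq {E : Type*}
    [NormedAddCommGroup E] [NormedSpace ℝ E] {Ω : Set E} {u : E → ℝ} {s : E}
    (hcone : HasUniformInteriorCone Ω s) (h0 : (0 : E) ∈ closure Ω)
    (hu : ContDiffOn ℝ 2 u (closure Ω)) :
    Tendsto (fun t : ℝ => (u (t • s) - u 0 - t * fderivWithin ℝ u (closure Ω) 0 s) / t ^ 2)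
      (𝓝[>] 0) (𝓝 (fderivWithin ℝ (fun x => fderivWithin ℝ u (closure Ω) x s) (closure Ω) 0 s
        / 2)) := by
  have hray : ∀ᶠ t : ℝ in 𝓝[≥] 0, t • s ∈ closure Ω := by
    rw [← Ioi_insert, nhdsWithin_insert, eventually_sup]
    refine ⟨by simpa using h0, ?_⟩
    exact (hcone.eventually_smul_mem h0).mono fun t ht => subset_closure ht
  refine _root_.tendsto_apply_smul_sub_sub_mul_div_sq ?_ (differentiableWithinAt_fderivWithin
    (hu 0 h0) (hasUniformInteriorCone_closure hcone).eventually_uniqueDiffWithinAt h0) hray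
  filter_upwards [self_mem_nhdsWithin] with x hx using (hu x hx).differentiableWithinAt (by simp)

variable {n : ℕ} {Ω : Set (EuclideanSpace ℝ (Fin n))}
  {a : EuclideanSpace ℝ (Fin n) → Fin n → Fin n → ℝ}
  {b : EuclideanSpace ℝ (Fin n) → Fin n → ℝ} {c u h : EuclideanSpace ℝ (Fin n) → ℝ} {M : ℝ}
  {s : EuclideanSpace ℝ (Fin n)}

lemma IsBarrier.exists_eventually_taylor_le (hh : IsBarrier Ω a b M h)
    (hcone : HasUniformInteriorCone Ω s) (h0 : (0 : EuclideanSpace ℝ (Fin n)) ∈ closure Ω)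
    (hΩ : IsOpen Ω) (hasym : ∀ x i j, a x i j = a x j i)
    (hell : ∀ x ∈ Ω, ∀ ξ : EuclideanSpace ℝ (Fin n), 0 ≤ ∑ i, ∑ j, a x i j * ξ i * ξ j)
    (hc : ∀ x ∈ Ω, |c x| ≤ M) (hu : ContDiffOn ℝ 2 u (closure Ω)) (huneg : ∀ x ∈ Ω, u x < 0)
    (hu0 : u 0 = 0) (hLu : ∀ x ∈ Ω, 0 ≤ diffusionOp (a x) (b x) u x + c x * u x)
    (hus : 0 ≤ fderivWithin ℝ u (closure Ω) 0 s) :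
    ∃ ε > 0, ∀ᶠ t : ℝ in 𝓝[>] 0,
      (u (t • s) - u 0 - t * fderivWithin ℝ u (closure Ω) 0 s) / t ^ 2
        ≤ -(ε * (h (t • s) / t ^ 2)) := by
  obtain ⟨ε, hε, hle⟩ := hh.exists_le_neg_mul hΩ hasym hell hc hu.continuousOn
    (hu.mono subset_closure) huneg hLu
  have hray : Tendsto (fun t : ℝ => t • s) (𝓝[>] 0) (𝓝[Ω] 0) :=
    tendsto_nhdsWithin_iff.2 ⟨tendsto_smul_nhdsGT_zero s, hcone.eventually_smul_mem h0⟩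
  refine ⟨ε, hε, ?_⟩
  filter_upwards [hray.eventually hle, self_mem_nhdsWithin] with t hut (ht : 0 < t)
  rw [← mul_div_assoc, ← neg_div, hu0]
  gcongr
  linarith [mul_nonneg ht.le hus]

theorem IsBarrier.fderivWithin_apply_neg_of_tendsto_atTop (hh : IsBarrier Ω a b M h)
    (hcone : HasUniformInteriorCone Ω s) (h0 : (0 : EuclideanSpace ℝ (Fin n)) ∈ closure Ω)
    (hΩ : IsOpen Ω) (hasym : ∀ x i j, a x i j = a x j i)
    (hell : ∀ x ∈ Ω, ∀ ξ : EuclideanSpace ℝ (Fin n), 0 ≤ ∑ i, ∑ j, a x i j * ξ i * ξ j)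
    (hc : ∀ x ∈ Ω, |c x| ≤ M) (hu : ContDiffOn ℝ 2 u (closure Ω)) (huneg : ∀ x ∈ Ω, u x < 0)
    (hu0 : u 0 = 0) (hLu : ∀ x ∈ Ω, 0 ≤ diffusionOp (a x) (b x) u x + c x * u x)
    (hgrowth : Tendsto (fun t : ℝ => h (t • s) / t ^ 2) (𝓝[>] 0) atTop) :
    fderivWithin ℝ u (closure Ω) 0 s < 0 := by
  by_contra! hus
  obtain ⟨ε, hε, hle⟩ := hh.exists_eventually_taylor_le hcone h0 hΩ hasym hell hc hu huneg hu0
    hLu hus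
  exact not_tendsto_nhds_of_tendsto_atBot
    (tendsto_atBot_mono' _ hle (tendsto_neg_atTop_atBot.comp (hgrowth.const_mul_atTop hε))) _
    (hcone.tendsto_apply_smul_sub_sub_mul_div_sq h0 hu)

theorem IsBarrier.fderivWithin_apply_neg_or_of_tendsto_nhds (hh : IsBarrier Ω a b M h)
    (hcone : HasUniformInteriorCone Ω s) (h0 : (0 : EuclideanSpace ℝ (Fin n)) ∈ closure Ω)
    (hΩ : IsOpen Ω) (hasym : ∀ x i j, a x i j = a x j i)
    (hell : ∀ x ∈ Ω, ∀ ξ : EuclideanSpace ℝ (Fin n), 0 ≤ ∑ i, ∑ j, a x i j * ξ i * ξ j)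
    (hc : ∀ x ∈ Ω, |c x| ≤ M) (hu : ContDiffOn ℝ 2 u (closure Ω)) (huneg : ∀ x ∈ Ω, u x < 0)
    (hu0 : u 0 = 0) (hLu : ∀ x ∈ Ω, 0 ≤ diffusionOp (a x) (b x) u x + c x * u x) {d : ℝ}
    (hd : 0 < d) (hgrowth : Tendsto (fun t : ℝ => h (t • s) / t ^ 2) (𝓝[>] 0) (𝓝 d)) :
    fderivWithin ℝ u (closure Ω) 0 s < 0 ∨
      fderivWithin ℝ (fun x => fderivWithin ℝ u (closure Ω) x s) (closure Ω) 0 s < 0 := by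
  refine or_iff_not_imp_left.2 fun hus => ?_
  obtain ⟨ε, hε, hle⟩ := hh.exists_eventually_taylor_le hcone h0 hΩ hasym hell hc hu huneg hu0
    hLu (not_lt.1 hus)
  have hsecond := le_of_tendsto_of_tendsto
    (hcone.tendsto_apply_smul_sub_sub_mul_div_sq h0 hu) (hgrowth.const_mul ε).neg hle
  linarith [mul_pos hε hd]

end RayDerivatives

section CornerBarriers

variable {n : ℕ} {Ω : Set (EuclideanSpace ℝ (Fin n))}
  {a : EuclideanSpace ℝ (Fin n) → Fin n → Fin n → ℝ}
  {b : EuclideanSpace ℝ (Fin n) → Fin n → ℝ} {l m : EuclideanSpace ℝ (Fin n) → ℝ}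
  {s : EuclideanSpace ℝ (Fin n)} {M : ℝ}

theorem exists_isBarrier_tendsto_atTop (hl : ContDiff ℝ 2 l) (hm : ContDiff ℝ 2 m)
    (hl0 : l 0 = 0) (hm0 : m 0 = 0) (hlΩ : ∀ x ∈ Ω, 0 < l x)
    (hfront : ∀ᶠ x in 𝓝[frontier Ω] 0, l x * m x = 0) (hasym : ∀ x i j, a x i j = a x j i)
    (ha : ∀ i j, ContinuousWithinAt (fun x => a x i j) Ω 0)
    (hb : ∀ i, (fun x => b x i) =O[𝓝[Ω] 0] (fun _ => (1 : ℝ)))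
    (hΓ : 0 < carreDuChamp (a 0) l m 0) (hls : 0 < fderiv ℝ l 0 s) (hms : 0 < fderiv ℝ m 0 s) :
    ∃ h, IsBarrier Ω a b M h ∧ Tendsto (fun t : ℝ => h (t • s) / t ^ 2) (𝓝[>] 0) atTop := by
  have hs : s ≠ 0 := by
    rintro rfl
    simp at hls
  have hΓ_near : ∀ᶠ x in 𝓝[Ω] 0, carreDuChamp (a 0) l m 0 / 2 ≤ carreDuChamp (a x) l m x :=
    (tendsto_carreDuChamp nhdsWithin_le_nhds ha (hl.of_le one_le_two).contDiffAt
      (hm.of_le one_le_two).contDiffAt).eventually_const_le (half_lt_self hΓ)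
  have hμ_small : ∀ᶠ μ : ℝ in 𝓝[>] 0, μ * ‖s‖ ^ 2 < fderiv ℝ l 0 s * fderiv ℝ m 0 s := by
    refine Tendsto.eventually_lt_const (mul_pos hls hms) ?_
    simpa using tendsto_smul_nhdsGT_zero (‖s‖ ^ 2)
  obtain ⟨μ, hbarrier, hμ⟩ := ((eventually_isBarrier_logBarrier (half_pos hΓ) hl hm hl0 hm0 hlΩ
    hfront hasym (fun i j => (ha i j).isBigO_one ℝ) hb hΓ_near).and hμ_small).exists
  exact ⟨_, hbarrier, tendsto_logBarrier_smul_div_sq (hl.differentiable two_ne_zero 0)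
    (hm.differentiable two_ne_zero 0) hl0 hm0 hs hμ⟩

theorem exists_isBarrier_tendsto_nhds (hl : ContDiff ℝ 2 l) (hm : ContDiff ℝ 2 m)
    (hl0 : l 0 = 0) (hm0 : m 0 = 0) (hpos : ∀ x ∈ Ω, 0 < l x ∧ 0 < m x)
    (hfront : ∀ᶠ x in 𝓝[frontier Ω] 0, l x * m x = 0) (hasym : ∀ x i j, a x i j = a x j i)
    (ha : ∀ i j, ContinuousWithinAt (fun x => a x i j) Ω 0)
    (hb : ∀ i, (fun x => b x i) =O[𝓝[Ω] 0] (fun _ => (1 : ℝ))) {lam : ℝ} (hlam : 0 < lam)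
    (hell : ∀ x ∈ Ω, ∀ ξ : EuclideanSpace ℝ (Fin n),
      lam * ‖ξ‖ ^ 2 ≤ ∑ i, ∑ j, a x i j * ξ i * ξ j)
    (hΓ : (fun x => carreDuChamp (a x) l m x) =O[𝓝[Ω] 0] fun x => ‖x‖)
    (hls : 0 < fderiv ℝ l 0 s) (hms : 0 < fderiv ℝ m 0 s) :
    ∃ h, IsBarrier Ω a b M h ∧
      ∃ d > 0, Tendsto (fun t : ℝ => h (t • s) / t ^ 2) (𝓝[>] 0) (𝓝 d) := by
  have hself : ∀ {f : EuclideanSpace ℝ (Fin n) → ℝ}, ContDiff ℝ 2 f → 0 < fderiv ℝ f 0 s →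
      ∃ κ > 0, ∀ᶠ x in 𝓝[Ω] 0, κ ≤ carreDuChamp (a x) f f x := fun hf hfs =>
    exists_eventually_le_carreDuChamp_self hlam nhdsWithin_le_nhds
      (eventually_mem_nhdsWithin.mono hell) (hf.of_le one_le_two).contDiffAt
      fun hf0 => by simp [hf0] at hfs
  obtain ⟨κ, hκ, hΓl⟩ := hself hl hls
  obtain ⟨κ', hκ', hΓm⟩ := hself hm hms
  refine ⟨cornerBarrier l m, ?_, _, mul_pos hls hms, tendsto_cornerBarrier_smul_div_sq
    (hl.differentiable two_ne_zero 0) (hm.differentiable two_ne_zero 0) hl0 hm0⟩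
  exact isBarrier_cornerBarrier (lt_min hκ hκ') hl hm hl0 hm0 hpos hfront hasym
    (fun i j => (ha i j).isBigO_one ℝ) hb (hΓl.mono fun _ => (min_le_left κ κ').trans)
    (hΓm.mono fun _ => (min_le_right κ κ').trans) hΓ

end CornerBarriers

theorem statement17_general {n : ℕ} {Ω : Set (EuclideanSpace ℝ (Fin n))} (hΩ : IsOpen Ω)
    (ho : (0 : EuclideanSpace ℝ (Fin n)) ∈ frontier Ω) {ρ σ : EuclideanSpace ℝ (Fin n) → ℝ}
    (hρ : ContDiff ℝ 2 ρ) (hσ : ContDiff ℝ 2 σ) (hρ0 : ρ 0 = 0) (hσ0 : σ 0 = 0)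
    (hneg : ∀ x ∈ Ω, ρ x < 0 ∧ σ x < 0)
    (hbdry : ∃ U ∈ 𝓝 (0 : EuclideanSpace ℝ (Fin n)),
      frontier Ω ∩ U ⊆ {x | ρ x = 0} ∪ {x | σ x = 0})
    {a : EuclideanSpace ℝ (Fin n) → Fin n → Fin n → ℝ}
    {b : EuclideanSpace ℝ (Fin n) → Fin n → ℝ} {c : EuclideanSpace ℝ (Fin n) → ℝ}
    (hasym : ∀ x i j, a x i j = a x j i)
    (ha : ∀ i j, ContinuousWithinAt (fun x => a x i j) Ω 0)
    (hb : ∃ M : ℝ, ∀ x ∈ Ω, ∀ i, |b x i| ≤ M) (hc : ∃ M : ℝ, ∀ x ∈ Ω, |c x| ≤ M)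
    (hell : ∃ lam > (0 : ℝ), ∀ x ∈ Ω, ∀ ξ : EuclideanSpace ℝ (Fin n),
      lam * ‖ξ‖ ^ 2 ≤ ∑ i, ∑ j, a x i j * ξ i * ξ j)
    {u : EuclideanSpace ℝ (Fin n) → ℝ} (hu : ContDiffOn ℝ 2 u (closure Ω))
    (huneg : ∀ x ∈ Ω, u x < 0) (hu0 : u 0 = 0)
    (hLu : ∀ x ∈ Ω, 0 ≤ diffusionOp (a x) (b x) u x + c x * u x)
    (hdeg : carreDuChamp (a 0) ρ σ 0 = 0 →
      (fun x => carreDuChamp (a x) ρ σ x) =O[𝓝[Ω] 0] fun x => ‖x‖)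
    {s : EuclideanSpace ℝ (Fin n)} (hρs : fderiv ℝ ρ 0 s < 0) (hσs : fderiv ℝ σ 0 s < 0) :
    (0 < carreDuChamp (a 0) ρ σ 0 → fderivWithin ℝ u (closure Ω) 0 s < 0) ∧
    (carreDuChamp (a 0) ρ σ 0 = 0 → fderivWithin ℝ u (closure Ω) 0 s < 0 ∨
      fderivWithin ℝ (fun x => fderivWithin ℝ u (closure Ω) x s) (closure Ω) 0 s < 0) := by
  obtain ⟨U, hU, hUf⟩ := hbdry
  obtain ⟨B, hB⟩ := hb
  obtain ⟨M, hM⟩ := hc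
  obtain ⟨lam, hlam, hell⟩ := hell
  have h0 : (0 : EuclideanSpace ℝ (Fin n)) ∈ closure Ω := frontier_subset_closure ho
  have hpos : ∀ x ∈ Ω, 0 < -ρ x ∧ 0 < -σ x := by simpa using hneg
  have hfront : ∀ᶠ x in 𝓝[frontier Ω] 0, -ρ x * -σ x = 0 := by
    filter_upwards [self_mem_nhdsWithin, nhdsWithin_le_nhds hU] with x hx hxU
    simpa using hUf ⟨hx, hxU⟩
  have hb : ∀ i, (fun x => b x i) =O[𝓝[Ω] 0] (fun _ => (1 : ℝ)) := fun i =>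
    .of_bound B (eventually_mem_nhdsWithin.mono fun x hx => by simpa using hB x hx i)
  have hell0 : ∀ x ∈ Ω, ∀ ξ : EuclideanSpace ℝ (Fin n), 0 ≤ ∑ i, ∑ j, a x i j * ξ i * ξ j :=
    fun x hx ξ => (by positivity : 0 ≤ lam * ‖ξ‖ ^ 2).trans (hell x hx ξ)
  have hls : 0 < fderiv ℝ (fun x => -ρ x) 0 s := by simpa [fderiv_fun_neg] using hρs
  have hms : 0 < fderiv ℝ (fun x => -σ x) 0 s := by simpa [fderiv_fun_neg] using hσs
  have hcone : HasUniformInteriorCone Ω s := hasUniformInteriorCone_of_fderiv_pos hΩ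
    (hρ.neg.of_le one_le_two) (hσ.neg.of_le one_le_two) hpos hfront hls hms
  constructor <;> intro hQ
  · obtain ⟨h, hh, hgrowth⟩ := exists_isBarrier_tendsto_atTop (M := M) hρ.neg hσ.neg (by simp [hρ0])
      (by simp [hσ0]) (fun x hx => (hpos x hx).1) hfront hasym ha hb
      (by rwa [carreDuChamp_neg_neg]) hls hms
    exact hh.fderivWithin_apply_neg_of_tendsto_atTop hcone h0 hΩ hasym hell0 hM hu huneg hu0 hLu
      hgrowth
  · obtain ⟨h, hh, d, hd, hgrowth⟩ := exists_isBarrier_tendsto_nhds (M := M) hρ.neg hσ.neg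
      (by simp [hρ0]) (by simp [hσ0]) hpos hfront hasym ha hb hlam hell
      (by simpa only [carreDuChamp_neg_neg] using hdeg hQ) hls hms
    exact hh.fderivWithin_apply_neg_or_of_tendsto_nhds hcone h0 hΩ hasym hell0 hM hu huneg hu0 hLu
      hd hgrowth

end SerrinCorner

/-- **Serrin's corner lemma.**  Let `Ω ⊂ ℝ^n` be a domain with the origin `o = 0` on its
boundary, such that near `o` the boundary consists of two transversally intersecting `C²`
hypersurfaces `{ρ = 0}` and `{σ = 0}` with `ρ, σ < 0` in `Ω`.  Let `L` be a uniformly elliptic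
operator with symmetric continuous second-order coefficients `a`, bounded `b, c`, and let
`u ∈ C²(closure Ω)` satisfy `u < 0` in `Ω`, `u(o) = 0` and `Lu ≥ 0` in `Ω`.  Assume
`Q(o) := Σ a_{ij} ρ_{x_i} σ_{x_j} ≥ 0` at `o`, and if `Q(o) = 0` assume moreover that
`a ∈ C²` near `o` and every first-order derivative of `Q` at `o` tangent to
`{ρ = 0} ∩ {σ = 0}` vanishes.  Then for any direction `s` at `o` entering `Ω` transversally to
each hypersurface: `∂u/∂s < 0` at `o` if `Q(o) > 0`, and `∂u/∂s < 0` or `∂²u/∂s² < 0` at `o`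
if `Q(o) = 0`. -/
theorem statement17 (n : ℕ)
    (Ω : Set (EuclideanSpace ℝ (Fin n)))
    (hΩo : IsOpen Ω) (hΩc : IsConnected Ω)
    (ho : (0 : EuclideanSpace ℝ (Fin n)) ∈ frontier Ω)
    (ρ σ : EuclideanSpace ℝ (Fin n) → ℝ)
    (hρ : ContDiff ℝ 2 ρ) (hσ : ContDiff ℝ 2 σ)
    (hρ0 : ρ 0 = 0) (hσ0 : σ 0 = 0)
    (htrans : LinearIndependent ℝ ![gradient ρ 0, gradient σ 0])
    (hneg : ∀ x ∈ Ω, ρ x < 0 ∧ σ x < 0)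
    (hbdry : ∃ U ∈ nhds (0 : EuclideanSpace ℝ (Fin n)),
        frontier Ω ∩ U ⊆ {x | ρ x = 0} ∪ {x | σ x = 0})
    (a : EuclideanSpace ℝ (Fin n) → Fin n → Fin n → ℝ)
    (b : EuclideanSpace ℝ (Fin n) → Fin n → ℝ)
    (c : EuclideanSpace ℝ (Fin n) → ℝ)
    (hasym : ∀ x i j, a x i j = a x j i)
    (hacont : ∀ i j, ContinuousOn (fun x => a x i j) (closure Ω))
    (hbbd : ∃ M : ℝ, ∀ x ∈ Ω, ∀ i, |b x i| ≤ M)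
    (hcbd : ∃ M : ℝ, ∀ x ∈ Ω, |c x| ≤ M)
    (hell : ∃ lam > (0 : ℝ), ∀ x ∈ Ω, ∀ ξ : EuclideanSpace ℝ (Fin n),
        lam * ‖ξ‖ ^ 2 ≤ ∑ i, ∑ j, a x i j * ξ i * ξ j)
    (u : EuclideanSpace ℝ (Fin n) → ℝ)
    (hu2 : ContDiffOn ℝ 2 u (closure Ω))
    (huneg : ∀ x ∈ Ω, u x < 0) (hu0 : u 0 = 0)
    (hLu : ∀ x ∈ Ω,
        0 ≤ (∑ i, ∑ j, a x i j * pd (pd u i) j x) + (∑ i, b x i * pd u i x) + c x * u x)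
    (hQ0 : 0 ≤ ∑ i, ∑ j, a 0 i j * pd ρ i 0 * pd σ j 0)
    (hdeg : (∑ i, ∑ j, a 0 i j * pd ρ i 0 * pd σ j 0) = 0 →
        (∃ U ∈ nhds (0 : EuclideanSpace ℝ (Fin n)),
            ∀ i j, ContDiffOn ℝ 2 (fun x => a x i j) U) ∧
        (∀ v : EuclideanSpace ℝ (Fin n),
            fderiv ℝ ρ 0 v = 0 → fderiv ℝ σ 0 v = 0 →
            fderiv ℝ (fun x => ∑ i, ∑ j, a x i j * pd ρ i x * pd σ j x) 0 v = 0)) :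
    ∀ s : EuclideanSpace ℝ (Fin n),
      fderiv ℝ ρ 0 s < 0 → fderiv ℝ σ 0 s < 0 →
      ((0 < ∑ i, ∑ j, a 0 i j * pd ρ i 0 * pd σ j 0) →
          fderivWithin ℝ u (closure Ω) 0 s < 0) ∧
      ((∑ i, ∑ j, a 0 i j * pd ρ i 0 * pd σ j 0) = 0 →
          fderivWithin ℝ u (closure Ω) 0 s < 0 ∨
          fderivWithin ℝ (fun x => fderivWithin ℝ u (closure Ω) x s) (closure Ω) 0 s < 0) := by
  refine fun s hρs hσs => statement17_general hΩo ho hρ hσ hρ0 hσ0 hneg hbdry hasym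
    (fun i j => (hacont i j 0 (frontier_subset_closure ho)).mono subset_closure) hbbd hcbd hell
    hu2 huneg hu0 hLu (fun hQ => ?_) hρs hσs
  obtain ⟨U, hU, ha⟩ := (hdeg hQ).1
  exact carreDuChamp_isBigO_norm (fun i j => (((ha i j).contDiffAt hU).differentiableAt
    two_ne_zero).differentiableWithinAt) hρ.contDiffAt hσ.contDiffAt hQ
end
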